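/- arXiv:q-alg/9708004 — 3 statements merged into one kernel-verified Lean document; each statement's English description precedes it below -/
import Mathlib

section
/- Let (λ, ρ) be a commuting pair of left and right coactions of a finite-dimensional Hopf algebra G on an algebra M, with dual commuting left and right Ĝ-actions ▷ and ◁. Then the vector space M ⊗ Ĝ equipped with the product (m ⋈ φ)(n ⋈ ψ) := m(φ₍₁₎ ▷ n ◁ Ŝ⁻¹(φ₍₃₎)) ⋈ φ₍₂₎ψ is an associative unital algebra with unit 1_M ⋈ 1̂, containing M ≅ M ⋈ 1̂ and Ĝ ≅ 1_M ⋈ Ĝ as unital subalgebras. -/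
open TensorProduct

/-- The Sweedler shuffle `φ ↦ (φ₍₁₎ ⊗ φ₍₃₎) ⊗ φ₍₂₎`. -/
noncomputable def sweedlerShuffle (H : Type*) [Ring H] [HopfAlgebra ℂ H] :
    H →ₗ[ℂ] (H ⊗[ℂ] H) ⊗[ℂ] H :=
  (TensorProduct.assoc ℂ H H H).symm.toLinearMap ∘ₗ
    TensorProduct.map LinearMap.id (TensorProduct.comm ℂ H H).toLinearMap ∘ₗ
    TensorProduct.map LinearMap.id (Coalgebra.comul (R := ℂ)) ∘ₗ
    Coalgebra.comul (R := ℂ)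

/-! Write the product as `(m ⋈ φ)(n ⋈ ψ) = m T(φ, n) ψ`, where `T(φ, n)` moves `φ` past `n`. If
`T` is compatible with units and products, left multiplication by `m ⋈ φ` is the composite of left
multiplication by `m` with an operator `L φ`, and left multiplication by `T(φ, n)` is `L φ` composed
with left multiplication by `n`. Hence left multiplication turns `⋈` into composition, which gives
associativity.

The two actions combine into one measuring action of `Ĝ ⊗ Ĝᵐᵒᵖ` on `M`, and
`φ ↦ (φ₍₁₎ ⊗ Ŝ⁻¹(φ₍₃₎)) ⊗ φ₍₂₎` makes `Ĝ` a comodule algebra over `Ĝ ⊗ Ĝᵐᵒᵖ`, because `Ŝ⁻¹` is an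
algebra and anti-coalgebra map `Ĝ → Ĝᵐᵒᵖ`. So `M ⋈ Ĝ` is a smash product, and its twisting map is
compatible with units and products for that reason. -/

namespace DiagonalCrossedProduct

open Coalgebra HopfAlgebra WithConv
open Algebra.TensorProduct (includeLeft includeRight)

section TwistedTensorProduct

variable {R M H : Type*} [CommSemiring R] [Semiring M] [Algebra R M] [Semiring H] [Algebra R H]

/-- Left multiplication by `1 ⊗ φ` in the twisted tensor product of `M` and `H` along `T`. -/
noncomputable def twistedLeftMul (T : H →ₗ[R] M →ₗ[R] M ⊗[R] H) :
    H →ₗ[R] Module.End R (M ⊗[R] H) :=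
  TensorProduct.uncurry (.id R) M H (M ⊗[R] H) ∘ₗ
    T.compr₂ ((LinearMap.mul R (M ⊗[R] H)).compl₂ includeRight.toLinearMap)

/-- The product `(m ⊗ φ) (n ⊗ ψ) = m T(φ, n) ψ` of the twisted tensor product of `M` and `H` along
`T`. -/
noncomputable def twistedMul (T : H →ₗ[R] M →ₗ[R] M ⊗[R] H) :
    M ⊗[R] H →ₗ[R] M ⊗[R] H →ₗ[R] M ⊗[R] H :=
  TensorProduct.lift ((LinearMap.mul R (Module.End R (M ⊗[R] H))).compl₁₂
    (LinearMap.mul R (M ⊗[R] H) ∘ₗ includeLeft.toLinearMap) (twistedLeftMul T))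

/-- `T φ m` moves `φ` past `m`, compatibly with the units and the products of `H` and `M`. The
last two fields are phrased with the product that `T` defines. -/
structure IsTwistingMap (T : H →ₗ[R] M →ₗ[R] M ⊗[R] H) : Prop where
  one_left (m : M) : T 1 m = m ⊗ₜ 1
  one_right (φ : H) : T φ 1 = 1 ⊗ₜ φ
  mul_left (φ ψ : H) (n : M) : T (φ * ψ) n = twistedLeftMul T φ (T ψ n)
  mul_right (φ : H) (m n : M) : T φ (m * n) = twistedMul T (T φ m) (n ⊗ₜ 1)

variable {T : H →ₗ[R] M →ₗ[R] M ⊗[R] H}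

@[simp]
theorem twistedLeftMul_tmul (φ ψ : H) (n : M) :
    twistedLeftMul T φ (n ⊗ₜ ψ) = T φ n * 1 ⊗ₜ ψ :=
  rfl

theorem twistedMul_tmul (m : M) (φ : H) :
    twistedMul T (m ⊗ₜ φ) = LinearMap.mulLeft R (m ⊗ₜ 1) * twistedLeftMul T φ :=
  rfl

theorem twistedMul_tmul_tmul (m n : M) (φ ψ : H) :
    twistedMul T (m ⊗ₜ φ) (n ⊗ₜ ψ) = m ⊗ₜ 1 * (T φ n * 1 ⊗ₜ ψ) :=
  rfl

theorem twistedMul_left_mul (m : M) (x : M ⊗[R] H) :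
    twistedMul T (m ⊗ₜ 1 * x) = LinearMap.mulLeft R (m ⊗ₜ 1) * twistedMul T x := by
  induction x with
  | zero => simp
  | add x y hx hy => simp only [mul_add, map_add, hx, hy]
  | tmul n φ =>
    refine LinearMap.ext fun y ↦ ?_
    simp only [Algebra.TensorProduct.tmul_mul_tmul, one_mul, twistedMul_tmul, Module.End.mul_apply,
      LinearMap.mulLeft_apply, ← mul_assoc]

theorem twistedLeftMul_mul_right (φ χ : H) (x : M ⊗[R] H) :
    twistedLeftMul T φ (x * 1 ⊗ₜ χ) = twistedLeftMul T φ x * 1 ⊗ₜ χ := by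
  induction x with
  | zero => simp
  | add x y hx hy => simp only [add_mul, map_add, hx, hy]
  | tmul n ψ => simp [mul_assoc]

theorem twistedMul_mul_right (x y : M ⊗[R] H) (χ : H) :
    twistedMul T x (y * 1 ⊗ₜ χ) = twistedMul T x y * 1 ⊗ₜ χ := by
  induction x with
  | zero => simp
  | add x y hx hy => simp only [map_add, LinearMap.add_apply, add_mul, hx, hy]
  | tmul m φ =>
    simp only [twistedMul_tmul, Module.End.mul_apply, LinearMap.mulLeft_apply,
      twistedLeftMul_mul_right, mul_assoc]

namespace IsTwistingMap

theorem twistedLeftMul_mul (hT : IsTwistingMap T) (φ ψ : H) :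
    twistedLeftMul T (φ * ψ) = twistedLeftMul T φ * twistedLeftMul T ψ :=
  TensorProduct.ext' fun n χ ↦ by
    rw [Module.End.mul_apply, twistedLeftMul_tmul, twistedLeftMul_tmul, hT.mul_left,
      twistedLeftMul_mul_right]

theorem twistedMul_apply_mul_right (hT : IsTwistingMap T) (x : M ⊗[R] H) (ψ : H) :
    twistedMul T (x * 1 ⊗ₜ ψ) = twistedMul T x * twistedLeftMul T ψ := by
  induction x with
  | zero => simp
  | add x y hx hy => simp only [add_mul, map_add, hx, hy]
  | tmul m φ =>
    rw [Algebra.TensorProduct.tmul_mul_tmul, mul_one, twistedMul_tmul, twistedMul_tmul,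
      hT.twistedLeftMul_mul, mul_assoc]

theorem twistedMul_twist (hT : IsTwistingMap T) (φ : H) (n : M) :
    twistedMul T (T φ n) = twistedLeftMul T φ * LinearMap.mulLeft R (n ⊗ₜ 1) :=
  TensorProduct.ext' fun p χ ↦ by
    calc twistedMul T (T φ n) (p ⊗ₜ χ)
        = twistedMul T (T φ n) (p ⊗ₜ 1 * 1 ⊗ₜ χ) := by simp
      _ = T φ (n * p) * 1 ⊗ₜ χ := by rw [twistedMul_mul_right, hT.mul_right]
      _ = (twistedLeftMul T φ * LinearMap.mulLeft R (n ⊗ₜ[R] (1 : H)) :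
          Module.End R (M ⊗[R] H)) (p ⊗ₜ χ) := by simp

theorem twistedMul_twistedMul (hT : IsTwistingMap T) (x y : M ⊗[R] H) :
    twistedMul T (twistedMul T x y) = twistedMul T x * twistedMul T y := by
  induction x with
  | zero => simp
  | add x₁ x₂ h₁ h₂ => simp only [map_add, LinearMap.add_apply, add_mul, h₁, h₂]
  | tmul m φ =>
    induction y with
    | zero => simp
    | add y₁ y₂ h₁ h₂ => simp only [map_add, mul_add, h₁, h₂]
    | tmul n ψ =>
      rw [twistedMul_tmul_tmul, twistedMul_left_mul, hT.twistedMul_apply_mul_right,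
        hT.twistedMul_twist, twistedMul_tmul, twistedMul_tmul]
      simp only [mul_assoc]

theorem twistedMul_assoc (hT : IsTwistingMap T) (x y z : M ⊗[R] H) :
    twistedMul T (twistedMul T x y) z = twistedMul T x (twistedMul T y z) :=
  LinearMap.congr_fun (hT.twistedMul_twistedMul x y) z

theorem tmul_one_twistedMul_tmul (hT : IsTwistingMap T) (m n : M) (ψ : H) :
    twistedMul T (m ⊗ₜ 1) (n ⊗ₜ ψ) = (m * n) ⊗ₜ ψ := by
  simp [twistedMul_tmul_tmul, hT.one_left]

theorem tmul_twistedMul_one_tmul (hT : IsTwistingMap T) (m : M) (φ ψ : H) :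
    twistedMul T (m ⊗ₜ φ) (1 ⊗ₜ ψ) = m ⊗ₜ (φ * ψ) := by
  simp [twistedMul_tmul_tmul, hT.one_right]

theorem one_twistedMul (hT : IsTwistingMap T) (x : M ⊗[R] H) :
    twistedMul T (1 ⊗ₜ 1) x = x :=
  LinearMap.congr_fun (g := .id) (TensorProduct.ext' fun n ψ ↦ by
    simp [hT.tmul_one_twistedMul_tmul]) x

theorem twistedMul_one (hT : IsTwistingMap T) (x : M ⊗[R] H) :
    twistedMul T x (1 ⊗ₜ 1) = x :=
  LinearMap.congr_fun (f := (twistedMul T).flip (1 ⊗ₜ 1)) (g := .id)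
    (TensorProduct.ext' fun m φ ↦ by simp [hT.tmul_twistedMul_one_tmul]) x

end IsTwistingMap

end TwistedTensorProduct

section Measuring

variable {R C D M : Type*} [CommSemiring R] [AddCommMonoid C] [Module R C]
  [AddCommMonoid D] [Module R D] [Semiring M] [Algebra R M]

/-- A coalgebra `C` measures an algebra `M` through `α` if `c (m n) = (c₍₁₎ m) (c₍₂₎ n)` and
`c 1 = ε(c) 1`. -/
structure IsMeasuring [CoalgebraStruct R C] (α : C →ₗ[R] M →ₗ[R] M) : Prop where
  map_mul (c : C) (m n : M) :
    α c (m * n) = LinearMap.mul' R M (TensorProduct.map (α.flip m) (α.flip n) (comul c))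
  map_one (c : C) : α c 1 = counit (R := R) c • 1

theorem IsMeasuring.tensor [CoalgebraStruct R C] [CoalgebraStruct R D] {α : C →ₗ[R] M →ₗ[R] M}
    {β : D →ₗ[R] M →ₗ[R] M} (hα : IsMeasuring α) (hβ : IsMeasuring β) :
    IsMeasuring (TensorProduct.lift ((LinearMap.mul R (Module.End R M)).compl₁₂ α β)) where
  map_mul z m n := by
    induction z with
    | zero => simp
    | add x y hx hy => simp only [map_add, LinearMap.add_apply, hx, hy]
    | tmul c d =>
      simp only [TensorProduct.lift.tmul, LinearMap.compl₁₂_apply, LinearMap.mul_apply',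
        Module.End.mul_apply, hβ.map_mul, TensorProduct.comul_tmul]
      induction comul (R := R) d with
      | zero => simp
      | add x y hx hy => simp only [map_add, TensorProduct.tmul_add, hx, hy]
      | tmul d₁ d₂ =>
        simp only [TensorProduct.map_tmul, LinearMap.flip_apply, LinearMap.mul'_apply, hα.map_mul]
        induction comul (R := R) c with
        | zero => simp
        | add x y hx hy => simp only [map_add, TensorProduct.add_tmul, hx, hy]
        | tmul c₁ c₂ => simp
  map_one z := by
    induction z with
    | zero => simp
    | add x y hx hy => simp only [map_add, LinearMap.add_apply, add_smul, hx, hy]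
    | tmul c d => simp [hα.map_one, hβ.map_one, smul_smul, mul_comm]

theorem IsMeasuring.comp_opLinearEquiv_symm [CoalgebraStruct R C] {α : C →ₗ[R] M →ₗ[R] M}
    (hα : IsMeasuring α) :
    IsMeasuring (α ∘ₗ (MulOpposite.opLinearEquiv R : C ≃ₗ[R] Cᵐᵒᵖ).symm.toLinearMap) where
  map_mul c m n := by
    simp only [LinearMap.comp_apply, LinearEquiv.coe_coe, MulOpposite.coe_opLinearEquiv_symm,
      hα.map_mul, MulOpposite.comul_def, TensorProduct.map_map]
    rfl
  map_one c := by
    simpa [MulOpposite.counit_def] using hα.map_one c.unop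

end Measuring

section LeftCoaction

variable {R C L V : Type*} [CommSemiring R] [AddCommMonoid C] [Module R C]
  [AddCommMonoid L] [Module R L] [AddCommMonoid V] [Module R V]

/-- A coassociative and counital left coaction of `C` on `V`. -/
structure IsLeftCoaction [CoalgebraStruct R C] (δ : V →ₗ[R] C ⊗[R] V) : Prop where
  coassoc (v : V) : comul.rTensor V (δ v) = (TensorProduct.assoc R C C V).symm (δ.lTensor C (δ v))
  counit_rTensor (v : V) : (counit (R := R) (A := C)).rTensor V (δ v) = 1 ⊗ₜ v

theorem isLeftCoaction_comul [Coalgebra R C] : IsLeftCoaction (comul (R := R) (A := C)) where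
  coassoc c := (coassoc_symm_apply c).symm
  counit_rTensor := rTensor_counit_comul

/-- The map `c ↦ σ(c₍₂₎) ⊗ c₍₁₎`, a left coaction of `L` on `C` when `σ : C → L` reverses the
comultiplication. -/
noncomputable def coopCoaction [CoalgebraStruct R C] (σ : C →ₗ[R] L) : C →ₗ[R] L ⊗[R] C :=
  σ.rTensor C ∘ₗ (TensorProduct.comm R C C).toLinearMap ∘ₗ comul

theorem leftComm_lTensor_coopCoaction_comul [Coalgebra R C] (σ : C →ₗ[R] L) (c : C) :
    TensorProduct.leftComm R C L C ((coopCoaction σ).lTensor C (comul c)) =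
      comul.lTensor L (coopCoaction σ c) := by
  have reassociate (z : C ⊗[R] C) : TensorProduct.leftComm R C L C
      ((σ.rTensor C ∘ₗ (TensorProduct.comm R C C).toLinearMap).lTensor C
        (TensorProduct.assoc R C C C (comul.rTensor C z))) =
      comul.lTensor L (σ.rTensor C (TensorProduct.comm R C C z)) := by
    induction z with
    | zero => simp
    | add x y hx hy => simp only [map_add, hx, hy]
    | tmul a b =>
      simp only [TensorProduct.comm_tmul, LinearMap.rTensor_tmul, LinearMap.lTensor_tmul]
      induction comul (R := R) a with
      | zero => simp
      | add x y hx hy =>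
        simp only [map_add, TensorProduct.tmul_add, TensorProduct.add_tmul, hx, hy]
      | tmul a₁ a₂ => simp
  rw [coopCoaction, ← LinearMap.comp_assoc, LinearMap.lTensor_comp_apply, ← coassoc_apply]
  exact reassociate _

theorem rTensor_comul_coopCoaction [CoalgebraStruct R C] [CoalgebraStruct R L] {σ : C →ₗ[R] L}
    (hσ : ∀ c, comul (R := R) (σ c) = TensorProduct.map σ σ (TensorProduct.comm R C C (comul c)))
    (c : C) :
    comul.rTensor C (coopCoaction σ c) = (TensorProduct.assoc R L L C).symm
      ((σ.rTensor C ∘ₗ (TensorProduct.comm R C C).toLinearMap).lTensor L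
        (TensorProduct.leftComm R C L C ((coopCoaction σ).lTensor C (comul c)))) := by
  rw [coopCoaction, LinearMap.comp_apply, LinearMap.comp_apply]
  induction comul (R := R) c with
  | zero => simp
  | add x y hx hy => simp only [map_add, hx, hy]
  | tmul a b =>
    simp only [LinearEquiv.coe_coe, TensorProduct.comm_tmul, LinearMap.rTensor_tmul,
      LinearMap.lTensor_tmul, LinearMap.comp_apply, hσ]
    induction comul (R := R) b with
    | zero => simp
    | add x y hx hy =>
      simp only [map_add, TensorProduct.tmul_add, TensorProduct.add_tmul, hx, hy]
    | tmul b₁ b₂ => simp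

theorem isLeftCoaction_coopCoaction [Coalgebra R C] [CoalgebraStruct R L] {σ : C →ₗ[R] L}
    (hσ : ∀ c, comul (R := R) (σ c) = TensorProduct.map σ σ (TensorProduct.comm R C C (comul c)))
    (hσ_counit : ∀ c, counit (R := R) (σ c) = counit (R := R) c) :
    IsLeftCoaction (coopCoaction σ) where
  coassoc c := by
    rw [rTensor_comul_coopCoaction hσ, leftComm_lTensor_coopCoaction_comul,
      ← LinearMap.lTensor_comp_apply, LinearMap.comp_assoc, ← coopCoaction]
  counit_rTensor c := by
    have counit_comm (z : C ⊗[R] C) :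
        (counit (R := R)).rTensor C (σ.rTensor C (TensorProduct.comm R C C z)) =
          TensorProduct.comm R C R ((counit (R := R)).lTensor C z) := by
      induction z with
      | zero => simp
      | add x y hx hy => simp only [map_add, hx, hy]
      | tmul a b => simp [hσ_counit]
    exact (counit_comm _).trans (by simp)

/-- The left coaction `v ↦ (c ⊗ l) ⊗ w` of `C ⊗ L` obtained by applying first a coaction of `C`,
then one of `L`. -/
noncomputable def tensorCoaction (δ₁ : V →ₗ[R] C ⊗[R] V) (δ₂ : V →ₗ[R] L ⊗[R] V) :
    V →ₗ[R] (C ⊗[R] L) ⊗[R] V :=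
  (TensorProduct.assoc R C L V).symm.toLinearMap ∘ₗ δ₂.lTensor C ∘ₗ δ₁

theorem rTensor_comul_assoc_symm_lTensor [CoalgebraStruct R C] [CoalgebraStruct R L]
    {δ : V →ₗ[R] L ⊗[R] V} (hδ : IsLeftCoaction δ) (z : C ⊗[R] V) :
    comul.rTensor V ((TensorProduct.assoc R C L V).symm (δ.lTensor C z)) =
      (TensorProduct.tensorTensorTensorComm R C C L L).toLinearMap.rTensor V
        ((TensorProduct.assoc R (C ⊗[R] C) (L ⊗[R] L) V).symm
          (((TensorProduct.assoc R L L V).symm.toLinearMap ∘ₗ δ.lTensor L ∘ₗ δ).lTensor (C ⊗[R] C)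
            (comul.rTensor V z))) := by
  induction z with
  | zero => simp
  | add x y hx hy => simp only [map_add, hx, hy]
  | tmul c v =>
    simp only [LinearMap.lTensor_tmul, LinearMap.rTensor_tmul, LinearMap.comp_apply,
      LinearEquiv.coe_coe, ← hδ.coassoc]
    induction δ v with
    | zero => simp
    | add x y hx hy => simp only [map_add, TensorProduct.tmul_add, hx, hy]
    | tmul l w =>
      simp [TensorProduct.comul_tmul, TensorProduct.AlgebraTensorModule.tensorTensorTensorComm_eq]

-- With `δ v = l ⊗ w` and `δ w = l' ⊗ u`, both sides send `c ⊗ (c' ⊗ v)` to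
-- `((c ⊗ l) ⊗ (c' ⊗ l')) ⊗ u`. The right side applies `δ` to `c' ⊗ v` first, so that it can be
-- exchanged with a commuting coaction of `C`.
theorem rTensor_tensorTensorTensorComm_assoc_symm (δ : V →ₗ[R] L ⊗[R] V)
    (z : C ⊗[R] (C ⊗[R] V)) :
    (TensorProduct.tensorTensorTensorComm R C C L L).toLinearMap.rTensor V
        ((TensorProduct.assoc R (C ⊗[R] C) (L ⊗[R] L) V).symm
          (((TensorProduct.assoc R L L V).symm.toLinearMap ∘ₗ δ.lTensor L ∘ₗ δ).lTensor (C ⊗[R] C)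
            ((TensorProduct.assoc R C C V).symm z))) =
      (TensorProduct.assoc R (C ⊗[R] L) (C ⊗[R] L) V).symm
        ((TensorProduct.assoc R C L ((C ⊗[R] L) ⊗[R] V)).symm
          ((((TensorProduct.assoc R C L V).symm.toLinearMap ∘ₗ δ.lTensor C).lTensor L ∘ₗ
            (TensorProduct.leftComm R C L V).toLinearMap ∘ₗ δ.lTensor C).lTensor C z)) := by
  induction z with
  | zero => simp
  | add x y hx hy => simp only [map_add, hx, hy]
  | tmul c z =>
    induction z with
    | zero => simp
    | add x y hx hy => simp only [map_add, TensorProduct.tmul_add, hx, hy]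
    | tmul c' v =>
      simp only [LinearMap.lTensor_tmul, LinearMap.comp_apply, LinearEquiv.coe_coe,
        TensorProduct.assoc_symm_tmul]
      induction δ v with
      | zero => simp
      | add x y hx hy => simp only [map_add, TensorProduct.tmul_add, hx, hy]
      | tmul l w =>
        simp only [LinearMap.lTensor_tmul, TensorProduct.leftComm_tmul, LinearMap.comp_apply,
          LinearEquiv.coe_coe]
        induction δ w with
        | zero => simp
        | add x y hx hy => simp only [map_add, TensorProduct.tmul_add, hx, hy]
        | tmul l' u => simp

theorem counit_rTensor_assoc_symm_lTensor [CoalgebraStruct R C] [CoalgebraStruct R L]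
    {δ : V →ₗ[R] L ⊗[R] V} (hδ : IsLeftCoaction δ) (z : C ⊗[R] V) :
    (counit (R := R)).rTensor V ((TensorProduct.assoc R C L V).symm (δ.lTensor C z)) =
      (counit (R := R)).rTensor V z := by
  have counit_tmul (c : C) (y : L ⊗[R] V) :
      (counit (R := R)).rTensor V ((TensorProduct.assoc R C L V).symm (c ⊗ₜ y)) =
        counit (R := R) c • (counit (R := R)).rTensor V y := by
    induction y with
    | zero => simp
    | add x y hx hy => simp only [map_add, TensorProduct.tmul_add, smul_add, hx, hy]
    | tmul l v => simp [TensorProduct.smul_tmul', mul_comm]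
  induction z with
  | zero => simp
  | add x y hx hy => simp only [map_add, hx, hy]
  | tmul c v => simp [counit_tmul, hδ.counit_rTensor, TensorProduct.smul_tmul']

theorem IsLeftCoaction.tensor [CoalgebraStruct R C] [CoalgebraStruct R L]
    {δ₁ : V →ₗ[R] C ⊗[R] V} {δ₂ : V →ₗ[R] L ⊗[R] V}
    (h₁ : IsLeftCoaction δ₁) (h₂ : IsLeftCoaction δ₂)
    (hcomm : ∀ v, TensorProduct.leftComm R C L V (δ₂.lTensor C (δ₁ v)) = δ₁.lTensor L (δ₂ v)) :
    IsLeftCoaction (tensorCoaction δ₁ δ₂) where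
  coassoc v := by
    have hcomm' : (TensorProduct.leftComm R C L V).toLinearMap ∘ₗ δ₂.lTensor C ∘ₗ δ₁ =
        δ₁.lTensor L ∘ₗ δ₂ := LinearMap.ext hcomm
    simp only [tensorCoaction, LinearMap.comp_apply, LinearEquiv.coe_coe]
    rw [rTensor_comul_assoc_symm_lTensor h₂, h₁.coassoc, rTensor_tensorTensorTensorComm_assoc_symm,
      ← LinearMap.lTensor_comp_apply, LinearMap.comp_assoc, LinearMap.comp_assoc, hcomm']
    rw [← LinearMap.comp_assoc, ← LinearMap.lTensor_comp]
    simp [LinearMap.lTensor_comp, LinearMap.lTensor_tensor]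
  counit_rTensor v :=
    (counit_rTensor_assoc_symm_lTensor h₂ _).trans (h₁.counit_rTensor v)

end LeftCoaction

section Smash

variable {R K M H : Type*} [CommSemiring R]

/-- The map `(φ, n) ↦ (k n) ⊗ ψ`, where `δ φ = k ⊗ ψ`, which moves `φ` past `n` in the smash product
of `M` and `H`. -/
noncomputable def smashTwist [AddCommMonoid K] [Module R K] [AddCommMonoid M] [Module R M]
    [AddCommMonoid H] [Module R H] (α : K →ₗ[R] M →ₗ[R] M) (δ : H →ₗ[R] K ⊗[R] H) :
    H →ₗ[R] M →ₗ[R] M ⊗[R] H :=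
  (LinearMap.lcomp R (M ⊗[R] H) δ ∘ₗ LinearMap.rTensorHom H ∘ₗ α.flip).flip

theorem smashTwist_apply [AddCommMonoid K] [Module R K] [AddCommMonoid M] [Module R M]
    [AddCommMonoid H] [Module R H] (α : K →ₗ[R] M →ₗ[R] M) (δ : H →ₗ[R] K ⊗[R] H) (φ : H) (n : M) :
    smashTwist α δ φ n = (α.flip n).rTensor H (δ φ) :=
  rfl

theorem smashTwist_one_right [AddCommMonoid K] [Module R K] [CoalgebraStruct R K]
    [Semiring M] [Algebra R M] [AddCommMonoid H] [Module R H]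
    {α : K →ₗ[R] M →ₗ[R] M} {δ : H →ₗ[R] K ⊗[R] H}
    (hα : IsMeasuring α) (hδ : IsLeftCoaction δ) (φ : H) : smashTwist α δ φ 1 = 1 ⊗ₜ φ := by
  have hflip : α.flip 1 = LinearMap.toSpanSingleton R M 1 ∘ₗ counit :=
    LinearMap.ext hα.map_one
  rw [smashTwist_apply, hflip, LinearMap.rTensor_comp_apply, hδ.counit_rTensor]
  simp

theorem smashTwist_mul_right [AddCommMonoid K] [Module R K] [CoalgebraStruct R K]
    [Semiring M] [Algebra R M] [Semiring H] [Algebra R H]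
    {α : K →ₗ[R] M →ₗ[R] M} {δ : H →ₗ[R] K ⊗[R] H}
    (hα : IsMeasuring α) (hδ : IsLeftCoaction δ) (φ : H) (m n : M) :
    smashTwist α δ φ (m * n) = twistedMul (smashTwist α δ) (smashTwist α δ φ m) (n ⊗ₜ 1) := by
  have hflip : α.flip (m * n) =
      LinearMap.mul' R M ∘ₗ TensorProduct.map (α.flip m) (α.flip n) ∘ₗ comul :=
    LinearMap.ext fun k ↦ hα.map_mul k m n
  rw [smashTwist_apply, hflip, ← LinearMap.comp_assoc, LinearMap.rTensor_comp_apply, hδ.coassoc,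
    smashTwist_apply]
  induction δ φ with
  | zero => simp
  | add x y hx hy => simp only [map_add, LinearMap.add_apply, hx, hy]
  | tmul k ψ =>
    simp only [LinearMap.lTensor_tmul, LinearMap.rTensor_tmul, twistedMul_tmul_tmul,
      smashTwist_apply, LinearMap.flip_apply, ← Algebra.TensorProduct.one_def, mul_one]
    induction δ ψ with
    | zero => simp
    | add x y hx hy => simp only [map_add, TensorProduct.tmul_add, mul_add, hx, hy]
    | tmul l χ => simp

theorem twistedMul_smashTwist_tmul_tmul [AddCommMonoid K] [Module R K] [Semiring M] [Algebra R M]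
    [Semiring H] [Algebra R H] (α : K →ₗ[R] M →ₗ[R] M) (δ : H →ₗ[R] K ⊗[R] H) (m n : M) (φ ψ : H) :
    twistedMul (smashTwist α δ) (m ⊗ₜ φ) (n ⊗ₜ ψ) =
      TensorProduct.map (LinearMap.mulLeft R m ∘ₗ α.flip n) (LinearMap.mulRight R ψ) (δ φ) := by
  rw [twistedMul_tmul_tmul, smashTwist_apply]
  induction δ φ with
  | zero => simp
  | add x y hx hy => simp only [map_add, add_mul, mul_add, hx, hy]
  | tmul k χ => simp

section Algebra

variable [Semiring K] [Algebra R K] [Semiring M] [Algebra R M] [Semiring H] [Algebra R H]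

theorem smashTwist_one_left (α : K →ₐ[R] Module.End R M) (δ : H →ₐ[R] K ⊗[R] H) (n : M) :
    smashTwist α.toLinearMap δ.toLinearMap 1 n = n ⊗ₜ 1 := by
  simp [smashTwist_apply, Algebra.TensorProduct.one_def]

theorem smashTwist_mul_left (α : K →ₐ[R] Module.End R M) (δ : H →ₐ[R] K ⊗[R] H)
    (φ ψ : H) (n : M) :
    smashTwist α.toLinearMap δ.toLinearMap (φ * ψ) n =
      twistedLeftMul (smashTwist α.toLinearMap δ.toLinearMap) φ
        (smashTwist α.toLinearMap δ.toLinearMap ψ n) := by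
  simp only [smashTwist_apply, AlgHom.toLinearMap_apply, map_mul]
  induction δ ψ with
  | zero => simp
  | add x y hx hy => simp only [map_add, mul_add, hx, hy]
  | tmul k χ =>
    simp only [LinearMap.rTensor_tmul, twistedLeftMul_tmul, smashTwist_apply,
      AlgHom.toLinearMap_apply]
    induction δ φ with
    | zero => simp
    | add x y hx hy => simp only [map_add, add_mul, hx, hy]
    | tmul l χ' => simp

theorem isTwistingMap_smashTwist [CoalgebraStruct R K]
    {α : K →ₐ[R] Module.End R M} {δ : H →ₐ[R] K ⊗[R] H}
    (hα : IsMeasuring α.toLinearMap) (hδ : IsLeftCoaction δ.toLinearMap) :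
    IsTwistingMap (smashTwist α.toLinearMap δ.toLinearMap) where
  one_left := smashTwist_one_left α δ
  one_right := smashTwist_one_right hα hδ
  mul_left := smashTwist_mul_left α δ
  mul_right := smashTwist_mul_right hα hδ

end Algebra

end Smash

section Antipode

variable {R H : Type*} [CommSemiring R] [Semiring H] [HopfAlgebra R H]

theorem comp_antipode_convMul {A : Type*} [Semiring A] [Algebra R A] (f : H →ₐ[R] A) :
    toConv (f.toLinearMap ∘ₗ antipode R) * toConv f.toLinearMap = 1 := by
  have hconv :=
    LinearMap.algHom_comp_convMul_distrib f (toConv (antipode R)) (toConv LinearMap.id)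
  rw [LinearMap.antipode_mul_id] at hconv
  have hf : f.toLinearMap ∘ₗ Algebra.linearMap R H = Algebra.linearMap R A := by ext; simp
  apply WithConv.ext
  simpa [LinearMap.convOne_def, ← LinearMap.comp_assoc, hf] using hconv.symm

theorem comul_comp_antipode :
    comul ∘ₗ antipode R = TensorProduct.map (antipode R) (antipode R) ∘ₗ
      (TensorProduct.comm R H H).toLinearMap ∘ₗ comul := by
  -- Both sides are convolution inverses of `comul = ι₁ * ι₂`.
  let ι₁ : H →ₐ[R] H ⊗[R] H := includeLeft
  let ι₂ : H →ₐ[R] H ⊗[R] H := includeRight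
  have comul_eq : toConv ι₁.toLinearMap * toConv ι₂.toLinearMap = toConv comul := by
    have mul_inclusions : LinearMap.mul' R (H ⊗[R] H) ∘ₗ
        TensorProduct.map ι₁.toLinearMap ι₂.toLinearMap = LinearMap.id := by ext; simp [ι₁, ι₂]
    rw [LinearMap.convMul_def, ofConv_toConv, ofConv_toConv, ← LinearMap.comp_assoc,
      mul_inclusions, LinearMap.id_comp]
  have antipode_eq : toConv (ι₂.toLinearMap ∘ₗ antipode R) * toConv (ι₁.toLinearMap ∘ₗ antipode R) =
      toConv (TensorProduct.map (antipode R) (antipode R) ∘ₗ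
        (TensorProduct.comm R H H).toLinearMap ∘ₗ comul) := by
    have mul_antipodes : LinearMap.mul' R (H ⊗[R] H) ∘ₗ
        TensorProduct.map (ι₂.toLinearMap ∘ₗ antipode R) (ι₁.toLinearMap ∘ₗ antipode R) =
          TensorProduct.map (antipode R) (antipode R) ∘ₗ
            (TensorProduct.comm R H H).toLinearMap := by
      ext; simp [ι₁, ι₂]
    rw [LinearMap.convMul_def, ofConv_toConv, ofConv_toConv, ← LinearMap.comp_assoc,
      mul_antipodes, LinearMap.comp_assoc]
  refine (toConv_injective (left_inv_eq_right_inv ?_ LinearMap.comul_right_inv)).symm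
  rw [← antipode_eq, ← comul_eq, mul_assoc, ← mul_assoc _ (toConv ι₁.toLinearMap),
    comp_antipode_convMul, one_mul, comp_antipode_convMul]

variable {Si : H →ₗ[R] H}

theorem inverse_antipode_one (hSi : ∀ a, Si (antipode R a) = a) : Si 1 = 1 := by
  simpa using hSi 1

theorem inverse_antipode_mul (hSi : ∀ a, Si (antipode R a) = a) (hSi' : ∀ a, antipode R (Si a) = a)
    (a b : H) : Si (a * b) = Si b * Si a := by
  rw [← hSi (Si b * Si a), antipode_mul_antidistrib, hSi', hSi']

theorem counit_inverse_antipode (hSi' : ∀ a, antipode R (Si a) = a) (a : H) :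
    counit (R := R) (Si a) = counit (R := R) a := by
  rw [← counit_antipode, hSi']

theorem comul_inverse_antipode (hSi : ∀ a, Si (antipode R a) = a)
    (hSi' : ∀ a, antipode R (Si a) = a) (a : H) :
    comul (R := R) (Si a) = TensorProduct.map Si Si (TensorProduct.comm R H H (comul a)) := by
  have hSi_comp : Si ∘ₗ antipode R = .id := LinearMap.ext hSi
  have h := LinearMap.congr_fun (comul_comp_antipode (R := R)) (Si a)
  simp only [LinearMap.comp_apply, LinearEquiv.coe_coe, hSi'] at h
  rw [h, TensorProduct.map_comm, TensorProduct.map_map, hSi_comp]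
  simp

/-- The inverse `Si` of the antipode, as an algebra map from `H` to its opposite. -/
noncomputable def inverseAntipodeOp (hSi : ∀ a, Si (antipode R a) = a)
    (hSi' : ∀ a, antipode R (Si a) = a) : H →ₐ[R] Hᵐᵒᵖ :=
  AlgHom.ofLinearMap ((MulOpposite.opLinearEquiv R).toLinearMap ∘ₗ Si)
    (congrArg MulOpposite.op (inverse_antipode_one hSi))
    fun a b ↦ congrArg MulOpposite.op (inverse_antipode_mul hSi hSi' a b)

theorem comul_inverseAntipodeOp (hSi : ∀ a, Si (antipode R a) = a)
    (hSi' : ∀ a, antipode R (Si a) = a) (a : H) :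
    comul (R := R) (inverseAntipodeOp hSi hSi' a) =
      TensorProduct.map (inverseAntipodeOp hSi hSi').toLinearMap
        (inverseAntipodeOp hSi hSi').toLinearMap (TensorProduct.comm R H H (comul a)) := by
  have h := congrArg (TensorProduct.map (MulOpposite.opLinearEquiv R).toLinearMap
    (MulOpposite.opLinearEquiv R).toLinearMap) (comul_inverse_antipode hSi hSi' a)
  rwa [TensorProduct.map_map] at h

end Antipode

section Diagonal

variable {R H L M : Type*} [CommSemiring R] [Semiring H] [Semiring L] [Semiring M] [Algebra R M]

/-- The algebra map `φ ↦ (φ₍₁₎ ⊗ σ(φ₍₃₎)) ⊗ φ₍₂₎`, by which `H ⊗ L` coacts on `H`. -/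
noncomputable def diagonalCoaction [Bialgebra R H] [Algebra R L] (σ : H →ₐ[R] L) :
    H →ₐ[R] (H ⊗[R] L) ⊗[R] H :=
  (Algebra.TensorProduct.assoc R R R H L H).symm.toAlgHom.comp <|
    (Algebra.TensorProduct.map (.id R H) <| (Algebra.TensorProduct.map σ (.id R H)).comp <|
      (Algebra.TensorProduct.comm R H H).toAlgHom.comp <| Bialgebra.comulAlgHom R H).comp <|
        Bialgebra.comulAlgHom R H

theorem isLeftCoaction_diagonalCoaction [Bialgebra R H] [Algebra R L] [CoalgebraStruct R L]
    {σ : H →ₐ[R] L}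
    (hσ : ∀ φ, comul (R := R) (σ φ) =
      TensorProduct.map σ.toLinearMap σ.toLinearMap (TensorProduct.comm R H H (comul φ)))
    (hσ_counit : ∀ φ, counit (R := R) (σ φ) = counit (R := R) φ) :
    IsLeftCoaction (diagonalCoaction σ).toLinearMap :=
  isLeftCoaction_comul.tensor (isLeftCoaction_coopCoaction hσ hσ_counit)
    (leftComm_lTensor_coopCoaction_comul σ.toLinearMap)

/-- The Sweedler shuffle `φ ↦ (φ₍₁₎ ⊗ φ₍₃₎) ⊗ φ₍₂₎` over an arbitrary base. -/
noncomputable def comulOuterMiddle (R C : Type*) [CommSemiring R] [AddCommMonoid C] [Module R C]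
    [CoalgebraStruct R C] : C →ₗ[R] (C ⊗[R] C) ⊗[R] C :=
  (TensorProduct.assoc R C C C).symm.toLinearMap ∘ₗ
    TensorProduct.map LinearMap.id (TensorProduct.comm R C C).toLinearMap ∘ₗ
    TensorProduct.map LinearMap.id comul ∘ₗ comul

theorem diagonalCoaction_apply [Bialgebra R H] [Algebra R L] (σ : H →ₐ[R] L) (φ : H) :
    diagonalCoaction σ φ = (σ.toLinearMap.lTensor H).rTensor H (comulOuterMiddle R H φ) := by
  have h : tensorCoaction comul (coopCoaction σ.toLinearMap) =
      (σ.toLinearMap.lTensor H).rTensor H ∘ₗ comulOuterMiddle R H := by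
    simp only [tensorCoaction, coopCoaction, comulOuterMiddle, coassoc_simps]
  exact LinearMap.congr_fun h φ

theorem isTwistingMap_diagonal [Bialgebra R H] [Algebra R L] [CoalgebraStruct R L]
    {α : H →ₐ[R] Module.End R M} {β : L →ₐ[R] Module.End R M}
    (hα : IsMeasuring α.toLinearMap) (hβ : IsMeasuring β.toLinearMap)
    (hcomm : ∀ φ χ, Commute (α φ) (β χ)) {σ : H →ₐ[R] L}
    (hσ : ∀ φ, comul (R := R) (σ φ) =
      TensorProduct.map σ.toLinearMap σ.toLinearMap (TensorProduct.comm R H H (comul φ)))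
    (hσ_counit : ∀ φ, counit (R := R) (σ φ) = counit (R := R) φ) :
    IsTwistingMap (smashTwist (Algebra.TensorProduct.lift α β hcomm).toLinearMap
      (diagonalCoaction σ).toLinearMap) :=
  isTwistingMap_smashTwist (hα.tensor hβ) (isLeftCoaction_diagonalCoaction hσ hσ_counit)

end Diagonal

end DiagonalCrossedProduct

open DiagonalCrossedProduct in
theorem statement3_general
    {R : Type*} (H M : Type*) [CommSemiring R] [Semiring H] [HopfAlgebra R H]
    [Semiring M] [Algebra R M]
    (Si : H →ₗ[R] H)
    (hSi1 : ∀ x : H, Si (HopfAlgebra.antipode R x) = x)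
    (hSi2 : ∀ x : H, HopfAlgebra.antipode R (Si x) = x)
    (act : H →ₗ[R] M →ₗ[R] M)
    (hact_mul : ∀ (φ ψ : H) (m : M), act (φ * ψ) m = act φ (act ψ m))
    (hact_one : ∀ m : M, act 1 m = m)
    (hact : IsMeasuring act)
    (ract : H →ₗ[R] M →ₗ[R] M)
    (hract_mul : ∀ (φ ψ : H) (m : M), ract ψ (ract φ m) = ract (φ * ψ) m)
    (hract_one : ∀ m : M, ract 1 m = m)
    (hract : IsMeasuring ract)
    (hcomm : ∀ (φ ψ : H) (m : M), act φ (ract ψ m) = ract ψ (act φ m))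
    (mul : M ⊗[R] H →ₗ[R] M ⊗[R] H →ₗ[R] M ⊗[R] H)
    (hmul : ∀ (m n : M) (φ ψ : H),
      mul (m ⊗ₜ[R] φ) (n ⊗ₜ[R] ψ) =
        TensorProduct.map
          (LinearMap.mulLeft R m ∘ₗ TensorProduct.lift act ∘ₗ
            TensorProduct.map LinearMap.id (ract.flip n ∘ₗ Si))
          (LinearMap.mulRight R ψ) (comulOuterMiddle R H φ)) :
    (∀ x y z : M ⊗[R] H, mul (mul x y) z = mul x (mul y z)) ∧
    (∀ x : M ⊗[R] H, mul ((1 : M) ⊗ₜ[R] (1 : H)) x = x) ∧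
    (∀ x : M ⊗[R] H, mul x ((1 : M) ⊗ₜ[R] (1 : H)) = x) ∧
    (∀ m n : M, mul (m ⊗ₜ[R] (1 : H)) (n ⊗ₜ[R] (1 : H)) = (m * n) ⊗ₜ[R] (1 : H)) ∧
    (∀ φ ψ : H, mul ((1 : M) ⊗ₜ[R] φ) ((1 : M) ⊗ₜ[R] ψ) = (1 : M) ⊗ₜ[R] (φ * ψ)) := by
  let α : H →ₐ[R] Module.End R M :=
    .ofLinearMap act (LinearMap.ext hact_one) fun φ ψ ↦ LinearMap.ext (hact_mul φ ψ)
  let β : Hᵐᵒᵖ →ₐ[R] Module.End R M :=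
    .ofLinearMap (ract ∘ₗ (MulOpposite.opLinearEquiv R).symm.toLinearMap)
      (LinearMap.ext hract_one) fun φ ψ ↦ LinearMap.ext fun m ↦ (hract_mul ψ.unop φ.unop m).symm
  have hαβ (φ : H) (χ : Hᵐᵒᵖ) : Commute (α φ) (β χ) := LinearMap.ext (hcomm φ χ.unop)
  let σ : H →ₐ[R] Hᵐᵒᵖ := inverseAntipodeOp hSi1 hSi2
  have hT := isTwistingMap_diagonal (α := α) (β := β) hact hract.comp_opLinearEquiv_symm hαβ
    (comul_inverseAntipodeOp hSi1 hSi2) (counit_inverse_antipode hSi2)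
  obtain rfl : mul = twistedMul (smashTwist (Algebra.TensorProduct.lift α β hαβ).toLinearMap
      (diagonalCoaction σ).toLinearMap) := by
    refine TensorProduct.ext' fun m φ ↦ TensorProduct.ext' fun n ψ ↦ ?_
    rw [hmul, twistedMul_smashTwist_tmul_tmul, AlgHom.toLinearMap_apply, diagonalCoaction_apply,
      LinearMap.map_rTensor]
    congr 2
    ext φ χ
    rfl
  exact ⟨hT.twistedMul_assoc, hT.one_twistedMul, hT.twistedMul_one,
    fun m n ↦ hT.tmul_one_twistedMul_tmul m n 1, fun φ ψ ↦ hT.tmul_twistedMul_one_tmul 1 φ ψ⟩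

/-- Let `(λ, ρ)` be a commuting pair of left and right coactions of a
finite-dimensional Hopf algebra `G` on `M`, encoded (dually) by the commuting pair of left and
right Hopf module actions `▷ = act` and `◁ = ract` of the dual Hopf algebra `Ĝ = H` on `M`.
Then `M ⊗ Ĝ` with the product `(m ⋈ φ)(n ⋈ ψ) = m(φ₁ ▷ n ◁ Ŝ⁻¹(φ₃)) ⋈ φ₂ψ` is an associative
unital algebra with unit `1_M ⋈ 1̂`, containing `M ≅ M ⋈ 1̂` and `Ĝ ≅ 1_M ⋈ Ĝ` as unital
subalgebras. -/
theorem statement3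
    (H M : Type*) [Ring H] [HopfAlgebra ℂ H] [Ring M] [Algebra ℂ M]
    [FiniteDimensional ℂ H]
    (Si : H →ₗ[ℂ] H)
    (hSi1 : ∀ x : H, Si (HopfAlgebra.antipode (R := ℂ) x) = x)
    (hSi2 : ∀ x : H, HopfAlgebra.antipode (R := ℂ) (Si x) = x)
    -- left Hopf module action `▷` of `Ĝ = H` (dual to `ρ`)
    (act : H →ₗ[ℂ] M →ₗ[ℂ] M)
    (hact_mul : ∀ (φ ψ : H) (m : M), act (φ * ψ) m = act φ (act ψ m))
    (hact_one : ∀ m : M, act 1 m = m)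
    (hact_alg : ∀ (φ : H) (m n : M),
      act φ (m * n) =
        LinearMap.mul' ℂ M
          (TensorProduct.map (act.flip m) (act.flip n) (Coalgebra.comul (R := ℂ) φ)))
    (hact_unit : ∀ φ : H, act φ (1 : M) = Coalgebra.counit (R := ℂ) φ • (1 : M))
    -- right Hopf module action `◁` of `Ĝ = H` (dual to `λ`)
    (ract : H →ₗ[ℂ] M →ₗ[ℂ] M)
    (hract_mul : ∀ (φ ψ : H) (m : M), ract ψ (ract φ m) = ract (φ * ψ) m)
    (hract_one : ∀ m : M, ract 1 m = m)
    (hract_alg : ∀ (φ : H) (m n : M),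
      ract φ (m * n) =
        LinearMap.mul' ℂ M
          (TensorProduct.map (ract.flip m) (ract.flip n) (Coalgebra.comul (R := ℂ) φ)))
    (hract_unit : ∀ φ : H, ract φ (1 : M) = Coalgebra.counit (R := ℂ) φ • (1 : M))
    -- the two actions commute (equivalently, `(λ ⊗ id) ∘ ρ = (id ⊗ ρ) ∘ λ`)
    (hcomm : ∀ (φ ψ : H) (m : M), act φ (ract ψ m) = ract ψ (act φ m))
    -- the diagonal product `(m ⋈ φ)(n ⋈ ψ) = m(φ₁ ▷ n ◁ Ŝ⁻¹(φ₃)) ⋈ φ₂ψ`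
    (mul : M ⊗[ℂ] H →ₗ[ℂ] M ⊗[ℂ] H →ₗ[ℂ] M ⊗[ℂ] H)
    (hmul : ∀ (m n : M) (φ ψ : H),
      mul (m ⊗ₜ[ℂ] φ) (n ⊗ₜ[ℂ] ψ) =
        TensorProduct.map
          (LinearMap.mulLeft ℂ m ∘ₗ TensorProduct.lift act ∘ₗ
            TensorProduct.map LinearMap.id (ract.flip n ∘ₗ Si))
          (LinearMap.mulRight ℂ ψ) (sweedlerShuffle H φ)) :
    -- associativity
    (∀ x y z : M ⊗[ℂ] H, mul (mul x y) z = mul x (mul y z)) ∧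
    -- unit
    (∀ x : M ⊗[ℂ] H, mul ((1 : M) ⊗ₜ[ℂ] (1 : H)) x = x) ∧
    (∀ x : M ⊗[ℂ] H, mul x ((1 : M) ⊗ₜ[ℂ] (1 : H)) = x) ∧
    -- `M ≅ M ⋈ 1̂` is a unital subalgebra
    (∀ m n : M, mul (m ⊗ₜ[ℂ] (1 : H)) (n ⊗ₜ[ℂ] (1 : H)) = (m * n) ⊗ₜ[ℂ] (1 : H)) ∧
    -- `Ĝ ≅ 1_M ⋈ Ĝ` is a unital subalgebra
    (∀ φ ψ : H, mul ((1 : M) ⊗ₜ[ℂ] φ) ((1 : M) ⊗ₜ[ℂ] ψ) = (1 : M) ⊗ₜ[ℂ] (φ * ψ)) :=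
  statement3_general H M Si hSi1 hSi2 act hact_mul hact_one ⟨hact_alg, hact_unit⟩ ract hract_mul
    hract_one ⟨hract_alg, hract_unit⟩ hcomm mul hmul
end

section
/- Let G be a finite-dimensional Hopf algebra and (λ, ρ) a commuting pair of coactions on M, and let γ : M → A be an algebra morphism into a target algebra A. Then the relation γ_T(m ⋈ φ) := γ(m)·(φ ⊗ id)(T) gives a one-to-one correspondence between: (a) elements T ∈ G ⊗ A satisfying (ε ⊗ id)(T) = 1_A, T·λ_A(m) = ρ_A^op(m)·T for all m ∈ M, and T¹³T²³ = (Δ ⊗ id)(T); and (b) unital algebra maps γ_T : M ⋈ Ĝ → A extending γ. -/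
open TensorProduct

/-! Put `t(φ) = (φ ⊗ id)(T)`. Since the pairing of `G` and `Ĝ` is perfect, `T ↦ t` is a bijection
from `G ⊗ A` onto the linear maps `Ĝ → A`. It turns normality and coherence of `T` into `t` being
a unital algebra map, and the `λρ`-intertwiner property into
`t(φ₍₁₎) γ(m ◁ φ₍₂₎) = γ(φ₍₁₎ ▷ m) t(φ₍₂₎)`. The right action `◁` is convolution-invertible with
inverse `φ ↦ (m ↦ m ◁ Ŝ⁻¹(φ))`, so moving it to the other side gives the exchange relation
`t(φ) γ(m) = γ(φ₍₁₎ ▷ m ◁ Ŝ⁻¹(φ₍₃₎)) t(φ₍₂₎)`, which is what multiplicativity of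
`m ⋈ φ ↦ γ(m) t(φ)` requires beyond that of `γ` and `t`. -/

open Coalgebra HopfAlgebra Function

section Convolve

variable {R C N P Q N' P' S : Type*} [CommSemiring R] [AddCommMonoid C] [Module R C]
  [AddCommMonoid N] [Module R N] [AddCommMonoid P] [Module R P] [AddCommMonoid Q] [Module R Q]
  [AddCommMonoid N'] [Module R N'] [AddCommMonoid P'] [Module R P'] [AddCommMonoid S] [Module R S]

/-- The convolution product `φ ↦ B (f φ₍₁₎) (g φ₍₂₎)` of linear maps out of a coalgebra along a
bilinear map `B`. Unlike the product of `WithConv (C →ₗ[R] A)`, the factors may take values in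
different modules, such as an algebra and a module over it. -/
noncomputable def convolve [CoalgebraStruct R C] (B : N →ₗ[R] P →ₗ[R] Q) :
    (C →ₗ[R] N) →ₗ[R] (C →ₗ[R] P) →ₗ[R] (C →ₗ[R] Q) :=
  (TensorProduct.mapBilinear (.id R) C C N P).compr₂
    (LinearMap.lcomp R Q comul ∘ₗ LinearMap.llcomp R (C ⊗[R] C) (N ⊗[R] P) Q (TensorProduct.lift B))

theorem convolve_apply [CoalgebraStruct R C] (B : N →ₗ[R] P →ₗ[R] Q) (f : C →ₗ[R] N)
    (g : C →ₗ[R] P) (c : C) :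
    convolve B f g c = TensorProduct.lift B (TensorProduct.map f g (comul c)) := rfl

theorem convolve_apply_eq_sum [CoalgebraStruct R C] (B : N →ₗ[R] P →ₗ[R] Q) (f : C →ₗ[R] N)
    (g : C →ₗ[R] P) {c : C} {ι : Type*} (r : Repr R c ι) :
    convolve B f g c = ∑ i ∈ r.index, B (f (r.left i)) (g (r.right i)) := by
  simp [convolve_apply, ← r.eq]

variable [Coalgebra R C]

theorem convolve_assoc {B₁ : N' →ₗ[R] S →ₗ[R] Q} {B₂ : N →ₗ[R] P →ₗ[R] N'}
    {B₃ : N →ₗ[R] P' →ₗ[R] Q} {B₄ : P →ₗ[R] S →ₗ[R] P'}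
    (hB : ∀ x y z, B₁ (B₂ x y) z = B₃ x (B₄ y z))
    (f : C →ₗ[R] N) (g : C →ₗ[R] P) (h : C →ₗ[R] S) :
    convolve B₁ (convolve B₂ f g) h = convolve B₃ f (convolve B₄ g h) := by
  have hlift : TensorProduct.lift B₁ ∘ₗ
        TensorProduct.map (TensorProduct.lift B₂ ∘ₗ TensorProduct.map f g) h =
      TensorProduct.lift B₃ ∘ₗ
        TensorProduct.map f (TensorProduct.lift B₄ ∘ₗ TensorProduct.map g h) ∘ₗ
        (TensorProduct.assoc R C C C).toLinearMap := by
    ext x y z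
    simp [hB]
  ext c
  calc convolve B₁ (convolve B₂ f g) h c
      = (TensorProduct.lift B₁ ∘ₗ
            TensorProduct.map (TensorProduct.lift B₂ ∘ₗ TensorProduct.map f g) h)
          (comul.rTensor C (comul (R := R) c)) := by
        rw [LinearMap.comp_apply, LinearMap.map_rTensor]; rfl
    _ = (TensorProduct.lift B₃ ∘ₗ
            TensorProduct.map f (TensorProduct.lift B₄ ∘ₗ TensorProduct.map g h))
          (comul.lTensor C (comul (R := R) c)) := by
        rw [hlift, ← coassoc_apply]; rfl
    _ = convolve B₃ f (convolve B₄ g h) c := by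
        rw [LinearMap.comp_apply, LinearMap.map_lTensor]; rfl

theorem convolve_smulRight_counit (B : N →ₗ[R] P →ₗ[R] Q) (f : C →ₗ[R] N) (y : P) :
    convolve B f (counit.smulRight y) = B.flip y ∘ₗ f := by
  ext c
  have hmap : TensorProduct.map f (counit.smulRight y) =
      TensorProduct.map f (LinearMap.toSpanSingleton R P y) ∘ₗ
        LinearMap.lTensor C (counit (R := R) (A := C)) := by
    ext; simp
  rw [convolve_apply, hmap, LinearMap.comp_apply, lTensor_counit_comul]
  simp

end Convolve

section InverseAntipode

variable {R H : Type*} [CommSemiring R] [Semiring H] [HopfAlgebra R H] {Si : H →ₗ[R] H}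

theorem sum_inverseAntipode_right_mul_left (hSi : LeftInverse Si (antipode R))
    (hSi' : RightInverse Si (antipode R)) {φ : H} {ι : Type*} (r : Repr R φ ι) :
    ∑ i ∈ r.index, Si (r.right i) * r.left i = counit (R := R) φ • (1 : H) := by
  apply hSi.injective
  simp only [map_sum, antipode_mul_antidistrib, hSi' _, sum_antipode_mul_eq_smul, map_smul,
    antipode_one]

theorem sum_right_mul_inverseAntipode_left (hSi : LeftInverse Si (antipode R))
    (hSi' : RightInverse Si (antipode R)) {φ : H} {ι : Type*} (r : Repr R φ ι) :
    ∑ i ∈ r.index, r.right i * Si (r.left i) = counit (R := R) φ • (1 : H) := by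
  apply hSi.injective
  simp only [map_sum, antipode_mul_antidistrib, hSi' _, sum_mul_antipode_eq_smul, map_smul,
    antipode_one]

theorem counit_inverseAntipode (hSi' : RightInverse Si (antipode R)) (φ : H) :
    counit (R := R) (Si φ) = counit (R := R) φ := by
  rw [← counit_antipode (R := R) (Si φ), hSi']

end InverseAntipode

section RightAction

variable {R H M N : Type*} [CommSemiring R] [Semiring H] [AddCommMonoid M] [Module R M]
  [AddCommMonoid N] [Module R N]

/-- A right action `m ◁ φ` of `H` on `M`, written as the curried map `φ ↦ (m ↦ m ◁ φ)`. -/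
structure IsRightAction [Algebra R H] (actR : H →ₗ[R] M →ₗ[R] M) : Prop where
  one (m : M) : actR 1 m = m
  mul (φ ψ : H) (m : M) : actR (φ * ψ) m = actR ψ (actR φ m)

variable [HopfAlgebra R H] {Si : H →ₗ[R] H} {actR : H →ₗ[R] M →ₗ[R] M}

theorem IsRightAction.convolve_comp_inverseAntipode (h : IsRightAction actR)
    (hSi : LeftInverse Si (antipode R)) (hSi' : RightInverse Si (antipode R)) :
    convolve (LinearMap.llcomp R M M M) actR (actR ∘ₗ Si) = counit.smulRight .id := by
  ext φ m
  rw [convolve_apply_eq_sum _ _ _ (ℛ R φ)]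
  simp [← h.mul, ← LinearMap.sum_apply, ← map_sum, h.one,
    sum_inverseAntipode_right_mul_left hSi hSi']

theorem IsRightAction.convolve_inverseAntipode_comp (h : IsRightAction actR)
    (hSi : LeftInverse Si (antipode R)) (hSi' : RightInverse Si (antipode R)) :
    convolve (LinearMap.llcomp R M M M) (actR ∘ₗ Si) actR = counit.smulRight .id := by
  ext φ m
  rw [convolve_apply_eq_sum _ _ _ (ℛ R φ)]
  simp [← h.mul, ← LinearMap.sum_apply, ← map_sum, h.one,
    sum_right_mul_inverseAntipode_left hSi hSi']

theorem IsRightAction.convolve_eq_iff (h : IsRightAction actR)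
    (hSi : LeftInverse Si (antipode R)) (hSi' : RightInverse Si (antipode R))
    {V U : H →ₗ[R] M →ₗ[R] N} :
    convolve (LinearMap.llcomp R M M N) V actR = U ↔
      convolve (LinearMap.llcomp R M M N) U (actR ∘ₗ Si) = V := by
  have hassoc (W : H →ₗ[R] M →ₗ[R] N) (k k' : H →ₗ[R] M →ₗ[R] M) :
      convolve (LinearMap.llcomp R M M N) (convolve (LinearMap.llcomp R M M N) W k) k' =
        convolve (LinearMap.llcomp R M M N) W (convolve (LinearMap.llcomp R M M M) k k') :=
    convolve_assoc (fun _ _ _ => rfl) W k k'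
  constructor <;> rintro rfl
  · rw [hassoc, h.convolve_comp_inverseAntipode hSi hSi', convolve_smulRight_counit]
    rfl
  · rw [hassoc, h.convolve_inverseAntipode_comp hSi hSi', convolve_smulRight_counit]
    rfl

end RightAction

section Straighten

variable {R H M A : Type*} [CommSemiring R] [AddCommMonoid H] [Module R H] [Coalgebra R H]
  [AddCommMonoid M] [Module R M] [Semiring A] [Algebra R A]

/-- The partial straightening `φ ↦ (n ↦ (φ₍₁₎ ▷ n) ⋈ φ₍₂₎)`, which involves the left action only. -/
noncomputable def straightenLeft (actL : H →ₗ[R] M →ₗ[R] M) : H →ₗ[R] M →ₗ[R] M ⊗[R] H :=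
  convolve ((LinearMap.llcomp R M M (M ⊗[R] H)).flip.compl₂ (TensorProduct.mk R M H).flip) actL .id

/-- The straightening `φ ↦ (n ↦ (φ₍₁₎ ▷ (n ◁ φ₍₃₎)) ⋈ φ₍₂₎)`, which for the right action
`n ◁ Ŝ⁻¹(φ)` is the product `(1 ⋈ φ)(n ⋈ 1)` of the diagonal crossed product. -/
noncomputable def straighten (actL actR : H →ₗ[R] M →ₗ[R] M) : H →ₗ[R] M →ₗ[R] M ⊗[R] H :=
  convolve (LinearMap.llcomp R M M (M ⊗[R] H)) (straightenLeft actL) actR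

variable {actL actR : H →ₗ[R] M →ₗ[R] M}

theorem straighten_apply_of_invariant {n : M} (hL : ∀ φ, actL φ n = counit (R := R) φ • n)
    (hR : ∀ φ, actR φ n = counit (R := R) φ • n) (φ : H) :
    straighten actL actR φ n = n ⊗ₜ φ := by
  have hflip : actR.flip n = counit.smulRight n := by ext; simp [hR]
  calc straighten actL actR φ n
      = convolve .id (straightenLeft actL) (actR.flip n) φ := by
        simp [straighten, convolve_apply_eq_sum _ _ _ (ℛ R φ)]
    _ = straightenLeft actL φ n := by rw [hflip, convolve_smulRight_counit]; rfl
    _ = ∑ i ∈ (ℛ R φ).index, n ⊗ₜ (counit (R := R) ((ℛ R φ).left i) • (ℛ R φ).right i) := by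
        simp [straightenLeft, convolve_apply_eq_sum _ _ _ (ℛ R φ), hL]
    _ = n ⊗ₜ φ := by rw [← TensorProduct.tmul_sum, sum_counit_smul]

/-- The linear map `t` intertwines the two dual actions along `γ`:
`t(φ₍₁₎) γ(m ◁ φ₍₂₎) = γ(φ₍₁₎ ▷ m) t(φ₍₂₎)`. -/
def Intertwines (actL actR : H →ₗ[R] M →ₗ[R] M) (γ : M →ₗ[R] A) (t : H →ₗ[R] A) : Prop :=
  ∀ m, convolve (LinearMap.mul R A) t (γ ∘ₗ actR.flip m) =
    convolve (LinearMap.mul R A) (γ ∘ₗ actL.flip m) t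

end Straighten

section CrossedLift

variable {R H M A : Type*} [CommSemiring R] [AddCommMonoid H] [Module R H]
  [AddCommMonoid M] [Module R M] [Semiring A] [Algebra R A]

/-- The linear map `m ⋈ φ ↦ γ(m) t(φ)`. -/
noncomputable def crossedLift (γ : M →ₗ[R] A) (t : H →ₗ[R] A) : M ⊗[R] H →ₗ[R] A :=
  TensorProduct.lift ((LinearMap.mul R A).compl₁₂ γ t)

@[simp]
theorem crossedLift_tmul (γ : M →ₗ[R] A) (t : H →ₗ[R] A) (m : M) (φ : H) :
    crossedLift γ t (m ⊗ₜ φ) = γ m * t φ := rfl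

end CrossedLift

theorem intertwines_iff_crossedLift_straighten {R H M A : Type*} [CommSemiring R] [Semiring H]
    [HopfAlgebra R H] [AddCommMonoid M] [Module R M] [Semiring A] [Algebra R A] {Si : H →ₗ[R] H}
    (hSi : LeftInverse Si (antipode R)) (hSi' : RightInverse Si (antipode R))
    {actL actR : H →ₗ[R] M →ₗ[R] M} (hR : IsRightAction actR) {γ : M →ₗ[R] A} {t : H →ₗ[R] A} :
    Intertwines actL actR γ t ↔
      ∀ φ n, crossedLift γ t (straighten actL (actR ∘ₗ Si) φ n) = t φ * γ n := by
  have hleft : Intertwines actL actR γ t ↔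
      convolve (LinearMap.llcomp R M M A) ((LinearMap.mul R A).compl₁₂ t γ) actR =
        LinearMap.llcomp R M (M ⊗[R] H) A (crossedLift γ t) ∘ₗ straightenLeft actL := by
    simp only [Intertwines, LinearMap.ext_iff]
    rw [forall_comm]
    refine forall₂_congr fun φ m => ?_
    simp [straightenLeft, convolve_apply_eq_sum _ _ _ (ℛ R φ)]
  rw [hleft, hR.convolve_eq_iff hSi hSi']
  simp only [LinearMap.ext_iff]
  refine forall₂_congr fun φ n => ?_
  simp [straighten, convolve_apply_eq_sum _ _ _ (ℛ R φ)]

section UnitalExtension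

variable {R H M A : Type*} [CommSemiring R] [Semiring H] [Algebra R H]
  [Semiring M] [Algebra R M] [Semiring A] [Algebra R A]

theorem crossedLift_map (γ : M →ₐ[R] A) {t : H →ₗ[R] A} (ht : ∀ φ ψ, t (φ * ψ) = t φ * t ψ)
    (m : M) (ψ : H) (z : M ⊗[R] H) :
    crossedLift γ.toLinearMap t
        (TensorProduct.map (LinearMap.mulLeft R m) (LinearMap.mulRight R ψ) z) =
      γ m * crossedLift γ.toLinearMap t z * t ψ := by
  induction z with
  | zero => simp
  | add x y hx hy => simp only [map_add, mul_add, add_mul, hx, hy]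
  | tmul x y => simp [ht, mul_assoc]

/-- The linear map `Γ` is a unital algebra map on `M ⋈ H`, with product `mul`, extending `γ`. -/
def IsUnitalExtension (mul : M ⊗[R] H →ₗ[R] M ⊗[R] H →ₗ[R] M ⊗[R] H) (γ : M →ₗ[R] A)
    (Γ : M ⊗[R] H →ₗ[R] A) : Prop :=
  (∀ x y, Γ (mul x y) = Γ x * Γ y) ∧ Γ (1 ⊗ₜ 1) = 1 ∧ ∀ m, Γ (m ⊗ₜ 1) = γ m

end UnitalExtension

/-- The conditions on `t` under which `m ⋈ φ ↦ γ(m) t(φ)` is a unital algebra map on `M ⋈ H`. -/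
structure IsCovariant {R H M A : Type*} [CommSemiring R] [Semiring H] [Bialgebra R H]
    [AddCommMonoid M] [Module R M] [Semiring A] [Algebra R A] (actL actR : H →ₗ[R] M →ₗ[R] M)
    (γ : M →ₗ[R] A) (t : H →ₗ[R] A) : Prop where
  map_one : t 1 = 1
  intertwines : Intertwines actL actR γ t
  map_mul (φ ψ : H) : t (φ * ψ) = t φ * t ψ

section DiagonalCrossedProduct

variable {R H M : Type*} [CommSemiring R] [Semiring H] [Bialgebra R H] [Semiring M] [Algebra R M]

/-- The product `(m ⋈ φ)(n ⋈ ψ) = m (φ₍₁₎ ▷ n ◁ Si φ₍₃₎) ⋈ φ₍₂₎ ψ` of the diagonal crossed product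
`M ⋈ H`, where `Si` stands for the inverse antipode of `H`. -/
noncomputable def diagonalMul (Si : H →ₗ[R] H) (actL actR : H →ₗ[R] M →ₗ[R] M) :
    M ⊗[R] H →ₗ[R] M ⊗[R] H →ₗ[R] M ⊗[R] H :=
  TensorProduct.curry <|
    TensorProduct.map (LinearMap.mul' R M) (LinearMap.mul' R H) ∘ₗ
      (TensorProduct.tensorTensorTensorAssoc R M M H H).symm.toLinearMap ∘ₗ
      ((TensorProduct.lift (straighten actL (actR ∘ₗ Si))).lTensor M).rTensor H ∘ₗ
      (TensorProduct.tensorTensorTensorAssoc R M H M H).toLinearMap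

variable {Si : H →ₗ[R] H} {actL actR : H →ₗ[R] M →ₗ[R] M}

theorem diagonalMul_tmul_tmul (m n : M) (φ ψ : H) :
    diagonalMul Si actL actR (m ⊗ₜ φ) (n ⊗ₜ ψ) =
      TensorProduct.map (LinearMap.mulLeft R m) (LinearMap.mulRight R ψ)
        (straighten actL (actR ∘ₗ Si) φ n) := by
  simp only [diagonalMul, TensorProduct.curry_apply, LinearMap.comp_apply, LinearEquiv.coe_coe,
    TensorProduct.tensorTensorTensorAssoc_tmul, LinearMap.rTensor_tmul, LinearMap.lTensor_tmul,
    TensorProduct.lift.tmul]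
  induction straighten actL (actR ∘ₗ Si) φ n with
  | zero => simp
  | add x y hx hy => simp only [map_add, TensorProduct.tmul_add, TensorProduct.add_tmul, hx, hy]
  | tmul x y => simp

end DiagonalCrossedProduct

section UniversalProperty

variable {R H M A : Type*} [CommSemiring R] [Semiring H] [HopfAlgebra R H] [Semiring M]
  [Algebra R M] [Semiring A] [Algebra R A] {Si : H →ₗ[R] H} {actL actR : H →ₗ[R] M →ₗ[R] M}

theorem isUnitalExtension_crossedLift_iff (hSi : LeftInverse Si (antipode R))
    (hSi' : RightInverse Si (antipode R)) (hR : IsRightAction actR)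
    (hL_one : ∀ φ, actL φ 1 = counit (R := R) φ • (1 : M))
    (hR_one : ∀ φ, actR φ 1 = counit (R := R) φ • (1 : M)) {γ : M →ₐ[R] A} {t : H →ₗ[R] A} :
    IsUnitalExtension (diagonalMul Si actL actR) γ.toLinearMap (crossedLift γ.toLinearMap t) ↔
      IsCovariant actL actR γ.toLinearMap t := by
  have hRSi (φ : H) : (actR ∘ₗ Si) φ 1 = counit (R := R) φ • (1 : M) := by
    simp [hR_one, counit_inverseAntipode hSi']
  constructor
  · rintro ⟨hmul, hone, -⟩
    have ht_one : t 1 = 1 := by simpa using hone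
    refine ⟨ht_one, (intertwines_iff_crossedLift_straighten hSi hSi' hR).2 fun φ n => ?_,
      fun φ ψ => ?_⟩
    · simpa [diagonalMul_tmul_tmul, ht_one] using hmul (1 ⊗ₜ φ) (n ⊗ₜ 1)
    · simpa [diagonalMul_tmul_tmul, straighten_apply_of_invariant hL_one hRSi] using
        hmul (1 ⊗ₜ φ) (1 ⊗ₜ ψ)
  · rintro ⟨hone, hint, hmul⟩
    rw [intertwines_iff_crossedLift_straighten hSi hSi' hR] at hint
    refine ⟨fun x y => ?_, by simp [hone], by simp [hone]⟩
    induction x with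
    | zero => simp
    | add x x' hx hx' => simp only [map_add, LinearMap.add_apply, add_mul, hx, hx']
    | tmul m φ =>
      induction y with
      | zero => simp
      | add y y' hy hy' => simp only [map_add, mul_add, hy, hy']
      | tmul n ψ =>
        rw [diagonalMul_tmul_tmul, crossedLift_map γ hmul, hint]
        simp [mul_assoc]

theorem IsUnitalExtension.eq_crossedLift (hSi' : RightInverse Si (antipode R))
    (hL_one : ∀ φ, actL φ 1 = counit (R := R) φ • (1 : M))
    (hR_one : ∀ φ, actR φ 1 = counit (R := R) φ • (1 : M)) {γ : M →ₗ[R] A}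
    {Γ : M ⊗[R] H →ₗ[R] A} (hΓ : IsUnitalExtension (diagonalMul Si actL actR) γ Γ) :
    Γ = crossedLift γ (Γ ∘ₗ TensorProduct.mk R M H 1) := by
  have hRSi (φ : H) : (actR ∘ₗ Si) φ 1 = counit (R := R) φ • (1 : M) := by
    simp [hR_one, counit_inverseAntipode hSi']
  obtain ⟨hmul, -, hext⟩ := hΓ
  ext m φ
  simpa [diagonalMul_tmul_tmul, straighten_apply_of_invariant hL_one hRSi, hext] using
    hmul (m ⊗ₜ 1) (1 ⊗ₜ φ)

end UniversalProperty

section Slice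

variable {R G H N P : Type*} [CommSemiring R] [AddCommMonoid G] [Module R G]
  [AddCommMonoid H] [Module R H] [AddCommMonoid N] [Module R N] [AddCommMonoid P] [Module R P]

/-- The slice map `T ↦ (φ ↦ (φ ⊗ id)(T))`, where `φ ∈ H` acts on `G` through the pairing `p`. -/
noncomputable def slice (p : G →ₗ[R] H →ₗ[R] R) : G ⊗[R] N →ₗ[R] H →ₗ[R] N :=
  (LinearMap.llcomp R (G ⊗[R] N) (R ⊗[R] N) N (TensorProduct.lid R N).toLinearMap ∘ₗ
    LinearMap.rTensorHom N ∘ₗ p.flip).flip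

variable {p : G →ₗ[R] H →ₗ[R] R}

theorem slice_apply (T : G ⊗[R] N) (φ : H) :
    slice p T φ = TensorProduct.lid R N (TensorProduct.map (p.flip φ) .id T) := rfl

@[simp]
theorem slice_tmul (a : G) (x : N) (φ : H) : slice p (a ⊗ₜ[R] x) φ = p a φ • x := by
  simp [slice_apply]

theorem slice_map_id (f : N →ₗ[R] P) (T : G ⊗[R] N) :
    slice p (TensorProduct.map .id f T) = f ∘ₗ slice p T := by
  induction T with
  | zero => simp
  | add S T hS hT => simp only [map_add, hS, hT, LinearMap.comp_add]
  | tmul a x => ext; simp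

theorem slice_comm (x : N ⊗[R] G) (φ : H) :
    slice p (TensorProduct.comm R N G x) φ =
      TensorProduct.rid R N (TensorProduct.map .id (p.flip φ) x) := by
  induction x with
  | zero => simp
  | add x y hx hy => simp only [map_add, LinearMap.add_apply, hx, hy]
  | tmul x a => simp

theorem slice_bijective [Module.Finite R H] [Module.Projective R H]
    (hp : Bijective p) : Bijective (slice p : G ⊗[R] N →ₗ[R] H →ₗ[R] N) := by
  have hslice : (slice p : G ⊗[R] N →ₗ[R] H →ₗ[R] N) =
      dualTensorHom R H N ∘ₗ ((LinearEquiv.ofBijective p hp).rTensor N).toLinearMap := by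
    ext; simp
  rw [hslice, LinearMap.coe_comp]
  exact dualTensorHom_bijective.comp (LinearEquiv.bijective _)

/-- A left coaction `lam` of `G` on a module. -/
structure IsLeftCoaction [Coalgebra R G] (lam : N →ₗ[R] G ⊗[R] N) : Prop where
  coassoc (n : N) : TensorProduct.map .id lam (lam n) =
    TensorProduct.assoc R G G N (TensorProduct.map comul .id (lam n))
  counit (n : N) : TensorProduct.lid R N (TensorProduct.map counit .id (lam n)) = n

/-- The action `n ◁ φ = (φ ⊗ id)(lam n)` of `H` dual to a left coaction of `G`. -/
noncomputable def dualRightAction (p : G →ₗ[R] H →ₗ[R] R) (lam : N →ₗ[R] G ⊗[R] N) :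
    H →ₗ[R] N →ₗ[R] N :=
  (slice p ∘ₗ lam).flip

/-- The action `φ ▷ n = (id ⊗ φ)(rho n)` of `H` dual to a right coaction of `G`. -/
noncomputable def dualLeftAction (p : G →ₗ[R] H →ₗ[R] R) (rho : N →ₗ[R] N ⊗[R] G) :
    H →ₗ[R] N →ₗ[R] N :=
  (slice p ∘ₗ (TensorProduct.comm R N G).toLinearMap ∘ₗ rho).flip

theorem dualRightAction_apply (lam : N →ₗ[R] G ⊗[R] N) (φ : H) (n : N) :
    dualRightAction p lam φ n = slice p (lam n) φ := rfl

theorem dualLeftAction_apply (rho : N →ₗ[R] N ⊗[R] G) (φ : H) (n : N) :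
    dualLeftAction p rho φ n = TensorProduct.rid R N (TensorProduct.map .id (p.flip φ) (rho n)) :=
  slice_comm (rho n) φ

end Slice

theorem slice_slice_leg_mul_leg {R G H A : Type*} [CommSemiring R] [Semiring G] [Algebra R G]
    [AddCommMonoid H] [Module R H] [Semiring A] [Algebra R A] {p : G →ₗ[R] H →ₗ[R] R}
    (T : G ⊗[R] A) (φ ψ : H) :
    slice p (slice p (TensorProduct.map .id (TensorProduct.mk R G A 1) T * (1 ⊗ₜ T)) φ) ψ =
      slice p T φ * slice p T ψ := by
  have hslice_one_tmul (x : A) (S : G ⊗[R] A) : slice p (1 ⊗ₜ x * S) ψ = x * slice p S ψ := by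
    induction S with
    | zero => simp
    | add S S' hS hS' => simp only [mul_add, map_add, LinearMap.add_apply, hS, hS']
    | tmul b y => simp
  have hslice_leg (S : G ⊗[R] A) :
      slice p (TensorProduct.map .id (TensorProduct.mk R G A 1) S * (1 ⊗ₜ T)) φ =
        1 ⊗ₜ slice p S φ * T := by
    induction S with
    | zero => simp
    | add S S' hS hS' =>
      simp only [map_add, add_mul, LinearMap.add_apply, TensorProduct.tmul_add, hS, hS']
    | tmul a x => simp
  rw [hslice_leg, hslice_one_tmul]

section Pairing

variable {R G H M N A : Type*} [CommSemiring R] [Semiring G] [Bialgebra R G]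
  [Semiring H] [Bialgebra R H] [AddCommMonoid N] [Module R N]
  [Semiring M] [Algebra R M] [Semiring A] [Algebra R A]

/-- A pairing of bialgebras, for which the product of each one is dual to the coproduct of the
other. -/
structure IsBialgebraPairing (p : G →ₗ[R] H →ₗ[R] R) : Prop where
  mul_left (a b : G) : p (a * b) = convolve (LinearMap.mul R R) (p a) (p b)
  one_left (φ : H) : p 1 φ = counit (R := R) φ
  mul_right (φ ψ : H) : p.flip (φ * ψ) = convolve (LinearMap.mul R R) (p.flip φ) (p.flip ψ)
  one_right (a : G) : p a 1 = counit (R := R) a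

variable {p : G →ₗ[R] H →ₗ[R] R}

theorem IsBialgebraPairing.slice_mul (hp : IsBialgebraPairing p) (S T : G ⊗[R] A) :
    slice p (S * T) = convolve (LinearMap.mul R A) (slice p S) (slice p T) := by
  induction S with
  | zero => simp
  | add S S' hS hS' => simp only [add_mul, map_add, LinearMap.add_apply, hS, hS']
  | tmul a x =>
    induction T with
    | zero => simp
    | add T T' hT hT' => simp only [mul_add, map_add, hT, hT']
    | tmul b y =>
      ext φ
      simp [hp.mul_left, convolve_apply_eq_sum _ _ _ (ℛ R φ), Finset.sum_smul, smul_smul,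
        mul_comm]

theorem IsBialgebraPairing.slice_one (hp : IsBialgebraPairing p) (T : G ⊗[R] N) :
    slice p T 1 = TensorProduct.lid R N (TensorProduct.map counit .id T) := by
  have hone : p.flip 1 = counit := LinearMap.ext hp.one_right
  rw [slice_apply, hone]

theorem IsBialgebraPairing.slice_slice_comul (hp : IsBialgebraPairing p) (T : G ⊗[R] N)
    (φ ψ : H) :
    slice p (slice p (TensorProduct.assoc R G G N (TensorProduct.map comul .id T)) φ) ψ =
      slice p T (φ * ψ) := by
  induction T with
  | zero => simp
  | add S T hS hT => simp only [map_add, LinearMap.add_apply, hS, hT]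
  | tmul a x =>
    have hmul : p a (φ * ψ) =
        ∑ i ∈ (ℛ R a).index, p ((ℛ R a).left i) φ * p ((ℛ R a).right i) ψ := by
      simpa [convolve_apply_eq_sum _ _ _ (ℛ R a)] using
        LinearMap.congr_fun (hp.mul_right φ ψ) a
    rw [slice_tmul, hmul, TensorProduct.map_tmul, ← (ℛ R a).eq]
    simp [TensorProduct.sum_tmul, Finset.sum_smul, smul_smul]

theorem IsBialgebraPairing.isRightAction_dualRightAction (hp : IsBialgebraPairing p)
    {lam : N →ₗ[R] G ⊗[R] N} (hlam : IsLeftCoaction lam) :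
    IsRightAction (dualRightAction p lam) where
  one n := by rw [dualRightAction_apply, hp.slice_one, hlam.counit]
  mul φ ψ n := by
    simp only [dualRightAction_apply]
    rw [← hp.slice_slice_comul, ← hlam.coassoc, slice_map_id, LinearMap.comp_apply]

theorem IsBialgebraPairing.dualRightAction_one (hp : IsBialgebraPairing p)
    {lam : M →ₗ[R] G ⊗[R] M} (hlam : lam 1 = 1) (φ : H) :
    dualRightAction p lam φ 1 = counit (R := R) φ • (1 : M) := by
  rw [dualRightAction_apply, hlam, Algebra.TensorProduct.one_def, slice_tmul, hp.one_left]

theorem IsBialgebraPairing.dualLeftAction_one (hp : IsBialgebraPairing p)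
    {rho : M →ₗ[R] M ⊗[R] G} (hrho : rho 1 = 1) (φ : H) :
    dualLeftAction p rho φ 1 = counit (R := R) φ • (1 : M) := by
  simp [dualLeftAction_apply, hrho, Algebra.TensorProduct.one_def, hp.one_left]

/-- The element `T` is a normal coherent `λρ`-intertwiner along `γ`. The three conditions are
`(ε ⊗ id)(T) = 1`, `T λ_A(m) = ρ_A^op(m) T` and `T¹³ T²³ = (Δ ⊗ id)(T)`. -/
def IsNormalCoherentIntertwiner (lam : N →ₗ[R] G ⊗[R] N) (rho : N →ₗ[R] N ⊗[R] G)
    (γ : N →ₗ[R] A) (T : G ⊗[R] A) : Prop :=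
  TensorProduct.lid R A (TensorProduct.map (counit (R := R)) .id T) = 1 ∧
  (∀ n, T * TensorProduct.map .id γ (lam n) =
    TensorProduct.comm R A G (TensorProduct.map γ .id (rho n)) * T) ∧
  TensorProduct.map .id (TensorProduct.mk R G A 1) T * (1 ⊗ₜ T) =
    TensorProduct.assoc R G G A (TensorProduct.map (comul (R := R)) .id T)

theorem IsBialgebraPairing.isNormalCoherentIntertwiner_iff (hp : IsBialgebraPairing p)
    (hslice : Injective (slice p : G ⊗[R] A →ₗ[R] H →ₗ[R] A))
    (hslice' : Injective (slice p : G ⊗[R] (G ⊗[R] A) →ₗ[R] H →ₗ[R] G ⊗[R] A))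
    {lam : N →ₗ[R] G ⊗[R] N} {rho : N →ₗ[R] N ⊗[R] G} {γ : N →ₗ[R] A} {T : G ⊗[R] A} :
    IsNormalCoherentIntertwiner lam rho γ T ↔
      IsCovariant (dualLeftAction p rho) (dualRightAction p lam) γ (slice p T) := by
  have hone : TensorProduct.lid R A (TensorProduct.map (counit (R := R)) .id T) = 1 ↔
      slice p T 1 = 1 := by rw [hp.slice_one]
  have hint : (∀ n, T * TensorProduct.map .id γ (lam n) =
      TensorProduct.comm R A G (TensorProduct.map γ .id (rho n)) * T) ↔
      Intertwines (dualLeftAction p rho) (dualRightAction p lam) γ (slice p T) := by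
    refine forall_congr' fun n => ?_
    rw [← hslice.eq_iff, hp.slice_mul, hp.slice_mul, slice_map_id, ← TensorProduct.map_comm,
      slice_map_id]
    rfl
  have hmul : TensorProduct.map .id (TensorProduct.mk R G A 1) T * (1 ⊗ₜ T) =
      TensorProduct.assoc R G G A (TensorProduct.map (comul (R := R)) .id T) ↔
      ∀ φ ψ, slice p T (φ * ψ) = slice p T φ * slice p T ψ := by
    rw [← hslice'.eq_iff, LinearMap.ext_iff]
    refine forall_congr' fun φ => ?_
    rw [← hslice.eq_iff, LinearMap.ext_iff]
    refine forall_congr' fun ψ => ?_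
    rw [slice_slice_leg_mul_leg, hp.slice_slice_comul, eq_comm]
  rw [IsNormalCoherentIntertwiner, hone, hint, hmul]
  exact ⟨fun ⟨h₁, h₂, h₃⟩ => ⟨h₁, h₂, h₃⟩, fun ⟨h₁, h₂, h₃⟩ => ⟨h₁, h₂, h₃⟩⟩

end Pairing

theorem straighten_apply_eq_map_sweedlerShuffle {H M : Type*} [Ring H] [HopfAlgebra ℂ H]
    [AddCommMonoid M] [Module ℂ M] (actL actR : H →ₗ[ℂ] M →ₗ[ℂ] M) (φ : H) (n : M) :
    straighten actL actR φ n =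
      TensorProduct.map (TensorProduct.lift actL ∘ₗ TensorProduct.map .id (actR.flip n)) .id
        (sweedlerShuffle H φ) := by
  have hassoc (z : H ⊗[ℂ] H) :
      TensorProduct.lift (LinearMap.llcomp ℂ M M (M ⊗[ℂ] H))
          (TensorProduct.map (straightenLeft actL) actR z) n =
        TensorProduct.map (TensorProduct.lift actL ∘ₗ TensorProduct.map .id (actR.flip n)) .id
          ((TensorProduct.assoc ℂ H H H).symm (TensorProduct.map .id
            (TensorProduct.comm ℂ H H).toLinearMap
              (TensorProduct.assoc ℂ H H H (comul.rTensor H z)))) := by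
    induction z with
    | zero => simp
    | add x y hx hy => simp only [map_add, LinearMap.add_apply, hx, hy]
    | tmul a b =>
      simp only [straightenLeft, TensorProduct.map_tmul, TensorProduct.lift.tmul,
        convolve_apply_eq_sum _ _ _ (ℛ ℂ a), LinearMap.rTensor_tmul]
      rw [← (ℛ ℂ a).eq]
      simp [TensorProduct.sum_tmul]
  rw [straighten, convolve_apply, hassoc, coassoc_apply]
  rfl

theorem diagonalMul_tmul_tmul_eq_map_sweedlerShuffle {H M : Type*} [Ring H] [HopfAlgebra ℂ H]
    [Semiring M] [Algebra ℂ M] (Si : H →ₗ[ℂ] H) (actL actR : H →ₗ[ℂ] M →ₗ[ℂ] M) (m n : M)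
    (φ ψ : H) :
    diagonalMul Si actL actR (m ⊗ₜ φ) (n ⊗ₜ ψ) =
      TensorProduct.map
        (LinearMap.mulLeft ℂ m ∘ₗ TensorProduct.lift actL ∘ₗ
          TensorProduct.map .id (actR.flip n ∘ₗ Si))
        (LinearMap.mulRight ℂ ψ) (sweedlerShuffle H φ) := by
  rw [diagonalMul_tmul_tmul, straighten_apply_eq_map_sweedlerShuffle, TensorProduct.map_map]
  rfl

theorem isPerfPair_of_nondegenerate {K V W : Type*} [Field K] [AddCommGroup V] [Module K V]
    [AddCommGroup W] [Module K W] [FiniteDimensional K V] {p : V →ₗ[K] W →ₗ[K] K}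
    (hV : ∀ v, (∀ w, p v w = 0) → v = 0) (hW : ∀ w, (∀ v, p v w = 0) → w = 0) :
    p.IsPerfPair :=
  .of_injective ((injective_iff_map_eq_zero p).2 fun v hv => hV v (LinearMap.congr_fun hv))
    ((injective_iff_map_eq_zero p.flip).2 fun w hw => hW w (LinearMap.congr_fun hw))

theorem statement10_general {R G H M A : Type*} [CommSemiring R] [Semiring G] [Bialgebra R G]
    [Semiring H] [HopfAlgebra R H] [Module.Finite R H] [Module.Projective R H]
    [Semiring M] [Algebra R M] [Semiring A] [Algebra R A]
    {Si : H →ₗ[R] H} (hSi : LeftInverse Si (antipode R)) (hSi' : RightInverse Si (antipode R))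
    {p : G →ₗ[R] H →ₗ[R] R} (hp : IsBialgebraPairing p) (hp' : Bijective p)
    {lam : M →ₗ[R] G ⊗[R] M} (hlam : IsLeftCoaction lam) (hlam_one : lam 1 = 1)
    {rho : M →ₗ[R] M ⊗[R] G} (hrho_one : rho 1 = 1) (γ : M →ₐ[R] A) :
    (∀ T : G ⊗[R] A, IsNormalCoherentIntertwiner lam rho γ.toLinearMap T →
      ∃! Γ : M ⊗[R] H →ₗ[R] A,
        IsUnitalExtension (diagonalMul Si (dualLeftAction p rho) (dualRightAction p lam))
          γ.toLinearMap Γ ∧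
        ∀ m φ, Γ (m ⊗ₜ φ) = γ m * slice p T φ) ∧
    (∀ Γ : M ⊗[R] H →ₗ[R] A,
      IsUnitalExtension (diagonalMul Si (dualLeftAction p rho) (dualRightAction p lam))
          γ.toLinearMap Γ →
      ∃! T : G ⊗[R] A, IsNormalCoherentIntertwiner lam rho γ.toLinearMap T ∧
        ∀ m φ, Γ (m ⊗ₜ φ) = γ m * slice p T φ) := by
  have hL_one := hp.dualLeftAction_one hrho_one
  have hR_one := hp.dualRightAction_one hlam_one
  have hcorr (T : G ⊗[R] A) : IsNormalCoherentIntertwiner lam rho γ.toLinearMap T ↔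
      IsUnitalExtension (diagonalMul Si (dualLeftAction p rho) (dualRightAction p lam))
        γ.toLinearMap (crossedLift γ.toLinearMap (slice p T)) := by
    rw [hp.isNormalCoherentIntertwiner_iff (slice_bijective hp').1 (slice_bijective hp').1,
      isUnitalExtension_crossedLift_iff hSi hSi' (hp.isRightAction_dualRightAction hlam)
        hL_one hR_one]
  have heq_iff (Γ : M ⊗[R] H →ₗ[R] A) (T : G ⊗[R] A) :
      (∀ m φ, Γ (m ⊗ₜ φ) = γ m * slice p T φ) ↔ Γ = crossedLift γ.toLinearMap (slice p T) :=
    ⟨fun h => TensorProduct.ext' h, fun h m φ => by rw [h]; rfl⟩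
  simp only [heq_iff]
  constructor
  · exact fun T hT => ⟨_, ⟨(hcorr T).1 hT, rfl⟩, fun Γ hΓ => hΓ.2⟩
  · intro Γ hΓ
    obtain ⟨T, hT⟩ := (slice_bijective hp').2 (Γ ∘ₗ TensorProduct.mk R M H 1)
    have hΓT : Γ = crossedLift γ.toLinearMap (slice p T) := by
      rw [hT]; exact hΓ.eq_crossedLift hSi' hL_one hR_one
    refine ⟨T, ⟨(hcorr T).2 (hΓT ▸ hΓ), hΓT⟩, fun T' hT' => (slice_bijective hp').1 ?_⟩
    ext φ
    simpa using LinearMap.congr_fun (hT'.2.symm.trans hΓT) (1 ⊗ₜ φ)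

/-- Let `G` be a finite-dimensional Hopf algebra with dual `Ĝ = H` (encoded
by a perfect Hopf pairing `p`), let `(λ, ρ)` be a commuting pair of coactions on `M`, and let
`γ : M → A` be an algebra morphism.  Then the relation `γ_T(m ⋈ φ) := γ(m)·(φ ⊗ id)(T)` gives
a one-to-one correspondence between (a) normal elements `T ∈ G ⊗ A` satisfying the
`λρ`-intertwiner property and the coherence property `T¹³T²³ = (Δ ⊗ id)(T)`, and (b) unital
algebra maps `γ_T : M ⋈ Ĝ → A` extending `γ`. -/
theorem statement10
    (G H M A : Type*) [Ring G] [HopfAlgebra ℂ G] [Ring H] [HopfAlgebra ℂ H]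
    [Ring M] [Algebra ℂ M] [Ring A] [Algebra ℂ A]
    [FiniteDimensional ℂ G] [FiniteDimensional ℂ H]
    -- inverse antipode of `Ĝ = H`
    (SiH : H →ₗ[ℂ] H)
    (hSiH1 : ∀ x : H, SiH (HopfAlgebra.antipode (R := ℂ) x) = x)
    (hSiH2 : ∀ x : H, HopfAlgebra.antipode (R := ℂ) (SiH x) = x)
    -- inverse antipode of `G`
    (SiG : G →ₗ[ℂ] G)
    (hSiG1 : ∀ x : G, SiG (HopfAlgebra.antipode (R := ℂ) x) = x)
    (hSiG2 : ∀ x : G, HopfAlgebra.antipode (R := ℂ) (SiG x) = x)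
    -- the Hopf pairing `⟨·|·⟩ : G ⊗ Ĝ → ℂ`
    (p : G →ₗ[ℂ] H →ₗ[ℂ] ℂ)
    (hp_mulG : ∀ (a b : G) (φ : H),
      p (a * b) φ =
        LinearMap.mul' ℂ ℂ (TensorProduct.map (p a) (p b) (Coalgebra.comul (R := ℂ) φ)))
    (hp_oneG : ∀ φ : H, p 1 φ = Coalgebra.counit (R := ℂ) φ)
    (hp_mulH : ∀ (a : G) (φ ψ : H),
      p a (φ * ψ) =
        LinearMap.mul' ℂ ℂ
          (TensorProduct.map (p.flip φ) (p.flip ψ) (Coalgebra.comul (R := ℂ) a)))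
    (hp_oneH : ∀ a : G, p a 1 = Coalgebra.counit (R := ℂ) a)
    (hp_antipode : ∀ (a : G) (φ : H),
      p (HopfAlgebra.antipode (R := ℂ) a) φ = p a (HopfAlgebra.antipode (R := ℂ) φ))
    (hp_nondegG : ∀ a : G, (∀ φ : H, p a φ = 0) → a = 0)
    (hp_nondegH : ∀ φ : H, (∀ a : G, p a φ = 0) → φ = 0)
    -- the commuting pair of coactions `(λ, ρ)` on `M`
    (lam : M →ₐ[ℂ] G ⊗[ℂ] M)
    (hlam_coassoc : ∀ m : M,
      TensorProduct.map LinearMap.id lam.toLinearMap (lam m) =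
        (TensorProduct.assoc ℂ G G M)
          (TensorProduct.map (Coalgebra.comul (R := ℂ)) LinearMap.id (lam m)))
    (hlam_counit : ∀ m : M,
      (TensorProduct.lid ℂ M)
        (TensorProduct.map (Coalgebra.counit (R := ℂ)) LinearMap.id (lam m)) = m)
    (rho : M →ₐ[ℂ] M ⊗[ℂ] G)
    (hrho_coassoc : ∀ m : M,
      (TensorProduct.assoc ℂ M G G)
          (TensorProduct.map rho.toLinearMap LinearMap.id (rho m)) =
        TensorProduct.map LinearMap.id (Coalgebra.comul (R := ℂ)) (rho m))
    (hrho_counit : ∀ m : M,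
      (TensorProduct.rid ℂ M)
        (TensorProduct.map LinearMap.id (Coalgebra.counit (R := ℂ)) (rho m)) = m)
    (hcomm : ∀ m : M,
      (TensorProduct.assoc ℂ G M G)
          (TensorProduct.map lam.toLinearMap LinearMap.id (rho m)) =
        TensorProduct.map LinearMap.id rho.toLinearMap (lam m))
    -- the dual actions `▷ = actL` (dual to `ρ`) and `◁ = actR` (dual to `λ`) of `Ĝ` on `M`
    (actL : H →ₗ[ℂ] M →ₗ[ℂ] M)
    (h_actL : ∀ (φ : H) (m : M),
      actL φ m =
        (TensorProduct.rid ℂ M)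
          (TensorProduct.map LinearMap.id (p.flip φ) (rho m)))
    (actR : H →ₗ[ℂ] M →ₗ[ℂ] M)
    (h_actR : ∀ (φ : H) (m : M),
      actR φ m =
        (TensorProduct.lid ℂ M)
          (TensorProduct.map (p.flip φ) LinearMap.id (lam m)))
    -- the diagonal crossed product `M ⋈ Ĝ` with
    -- `(m ⋈ φ)(n ⋈ ψ) = m(φ₁ ▷ n ◁ Ŝ⁻¹(φ₃)) ⋈ φ₂ψ`
    (mulMH : M ⊗[ℂ] H →ₗ[ℂ] M ⊗[ℂ] H →ₗ[ℂ] M ⊗[ℂ] H)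
    (hmulMH : ∀ (m n : M) (φ ψ : H),
      mulMH (m ⊗ₜ[ℂ] φ) (n ⊗ₜ[ℂ] ψ) =
        TensorProduct.map
          (LinearMap.mulLeft ℂ m ∘ₗ TensorProduct.lift actL ∘ₗ
            TensorProduct.map LinearMap.id (actR.flip n ∘ₗ SiH))
          (LinearMap.mulRight ℂ ψ) (sweedlerShuffle H φ))
    -- the algebra map `γ : M → A`
    (γ : M →ₐ[ℂ] A) :
    -- (a) every normal coherent `λρ`-intertwiner `T` determines a unique algebra map
    --     `γ_T` extending `γ` via `γ_T(m ⋈ φ) = γ(m)·(φ ⊗ id)(T)` ...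
    (∀ T : G ⊗[ℂ] A,
      ((TensorProduct.lid ℂ A)
          (TensorProduct.map (Coalgebra.counit (R := ℂ)) LinearMap.id T) = 1 ∧
       (∀ m : M,
         T * TensorProduct.map LinearMap.id γ.toLinearMap (lam m) =
           (TensorProduct.comm ℂ A G)
               (TensorProduct.map γ.toLinearMap LinearMap.id (rho m)) * T) ∧
       TensorProduct.map LinearMap.id (TensorProduct.mk ℂ G A (1 : G)) T *
           ((1 : G) ⊗ₜ[ℂ] T) =
         (TensorProduct.assoc ℂ G G A)
           (TensorProduct.map (Coalgebra.comul (R := ℂ)) LinearMap.id T)) →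
      ∃! γT : M ⊗[ℂ] H →ₗ[ℂ] A,
        ((∀ x y : M ⊗[ℂ] H, γT (mulMH x y) = γT x * γT y) ∧
         γT ((1 : M) ⊗ₜ[ℂ] (1 : H)) = 1 ∧
         (∀ m : M, γT (m ⊗ₜ[ℂ] (1 : H)) = γ m)) ∧
        (∀ (m : M) (φ : H),
          γT (m ⊗ₜ[ℂ] φ) =
            γ m *
              (TensorProduct.lid ℂ A)
                (TensorProduct.map (p.flip φ) LinearMap.id T))) ∧
    -- (b) ... and conversely every unital algebra map `γ_T` extending `γ` arises this way
    --     from a unique normal coherent `λρ`-intertwiner `T`.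
    (∀ γT : M ⊗[ℂ] H →ₗ[ℂ] A,
      ((∀ x y : M ⊗[ℂ] H, γT (mulMH x y) = γT x * γT y) ∧
       γT ((1 : M) ⊗ₜ[ℂ] (1 : H)) = 1 ∧
       (∀ m : M, γT (m ⊗ₜ[ℂ] (1 : H)) = γ m)) →
      ∃! T : G ⊗[ℂ] A,
        ((TensorProduct.lid ℂ A)
            (TensorProduct.map (Coalgebra.counit (R := ℂ)) LinearMap.id T) = 1 ∧
         (∀ m : M,
           T * TensorProduct.map LinearMap.id γ.toLinearMap (lam m) =
             (TensorProduct.comm ℂ A G)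
                 (TensorProduct.map γ.toLinearMap LinearMap.id (rho m)) * T) ∧
         TensorProduct.map LinearMap.id (TensorProduct.mk ℂ G A (1 : G)) T *
             ((1 : G) ⊗ₜ[ℂ] T) =
           (TensorProduct.assoc ℂ G G A)
             (TensorProduct.map (Coalgebra.comul (R := ℂ)) LinearMap.id T)) ∧
        (∀ (m : M) (φ : H),
          γT (m ⊗ₜ[ℂ] φ) =
            γ m *
              (TensorProduct.lid ℂ A)
                (TensorProduct.map (p.flip φ) LinearMap.id T))) := by
  have hp : IsBialgebraPairing p :=
    ⟨fun a b => LinearMap.ext (hp_mulG a b), hp_oneG,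
      fun φ ψ => LinearMap.ext fun a => hp_mulH a φ ψ, hp_oneH⟩
  have hp_perf : p.IsPerfPair := isPerfPair_of_nondegenerate hp_nondegG hp_nondegH
  obtain rfl : actL = dualLeftAction p rho.toLinearMap := by
    ext φ m; rw [h_actL, dualLeftAction_apply]; rfl
  obtain rfl : actR = dualRightAction p lam.toLinearMap := LinearMap.ext₂ h_actR
  obtain rfl : mulMH =
      diagonalMul SiH (dualLeftAction p rho.toLinearMap) (dualRightAction p lam.toLinearMap) := by
    refine TensorProduct.ext' fun m φ => TensorProduct.ext' fun n ψ => ?_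
    rw [hmulMH, diagonalMul_tmul_tmul_eq_map_sweedlerShuffle]
  exact statement10_general hSiH1 hSiH2 hp hp_perf.bijective_left ⟨hlam_coassoc, hlam_counit⟩
    (map_one lam) (rho := rho.toLinearMap) (map_one rho) γ
end

section
/- Let (M, Δ_M, ε_M) be a bialgebra and (λ, ρ) a commuting pair of left and right G-coactions on M over a Hopf algebra G. Then the compatibility condition (ρ ⊗ id_M) ∘ Δ_M = (id_M ⊗ λ) ∘ Δ_M holds if and only if κ := (id_G ⊗ ε_M) ∘ λ = (ε_M ⊗ id_G) ∘ ρ is a well-defined bialgebra homomorphism κ : M → G satisfying λ = (κ ⊗ id_M) ∘ Δ_M and ρ = (id_M ⊗ κ) ∘ Δ_M. -/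
open TensorProduct

/-!
If `(ρ ⊗ id) ∘ Δ = (id ⊗ λ) ∘ Δ`, then applying `ε` to the last tensor factor gives
`ρ = (id ⊗ κ) ∘ Δ` for `κ = (id ⊗ ε) ∘ λ`, and applying it to the first gives `λ = (κ' ⊗ id) ∘ Δ`
for `κ' = (ε ⊗ id) ∘ ρ`. Evaluating the remaining `ε` in the latter shows `κ = κ'`. Conversely, for
`λ` and `ρ` of this form the compatibility condition is the coassociativity of `Δ`. The comodule
axioms for `λ = (κ ⊗ id) ∘ Δ`, evaluated with `ε`, say that `κ` is a coalgebra map, and `κ` is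
multiplicative because `λ` and `ε` are.
-/

section EvalCounit

variable {R A B C D P Q : Type*} [CommSemiring R]
  [AddCommMonoid A] [Module R A] [AddCommMonoid B] [Module R B]
  [AddCommMonoid C] [Module R C] [AddCommMonoid D] [Module R D]
  [AddCommMonoid P] [Module R P] [AddCommMonoid Q] [Module R Q]

/-- The map `(id ⊗ ε) ∘ f`, where `A ⊗ R` is identified with `A`. -/
noncomputable def evalCounitRight [CoalgebraStruct R C] (f : P →ₗ[R] A ⊗[R] C) : P →ₗ[R] A :=
  (TensorProduct.rid R A).toLinearMap ∘ₗ map LinearMap.id Coalgebra.counit ∘ₗ f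

/-- The map `(ε ⊗ id) ∘ f`, where `R ⊗ A` is identified with `A`. -/
noncomputable def evalCounitLeft [CoalgebraStruct R C] (f : P →ₗ[R] C ⊗[R] A) : P →ₗ[R] A :=
  (TensorProduct.lid R A).toLinearMap ∘ₗ map Coalgebra.counit LinearMap.id ∘ₗ f

lemma evalCounitRight_map_comp [CoalgebraStruct R C] (g : A →ₗ[R] B) (f : P →ₗ[R] A ⊗[R] C) :
    evalCounitRight (map g LinearMap.id ∘ₗ f) = g ∘ₗ evalCounitRight f := by
  simp only [evalCounitRight, coassoc_simps]

lemma evalCounitLeft_map_comp [CoalgebraStruct R C] (g : A →ₗ[R] B) (f : P →ₗ[R] C ⊗[R] A) :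
    evalCounitLeft (map LinearMap.id g ∘ₗ f) = g ∘ₗ evalCounitLeft f := by
  simp only [evalCounitLeft, coassoc_simps]

lemma evalCounitRight_assoc_symm_comp [CoalgebraStruct R C]
    (g : Q →ₗ[R] B ⊗[R] C) (f : P →ₗ[R] A ⊗[R] Q) :
    evalCounitRight ((TensorProduct.assoc R A B C).symm.toLinearMap ∘ₗ
      map LinearMap.id g ∘ₗ f) = map LinearMap.id (evalCounitRight g) ∘ₗ f := by
  have evalCounitRight_assoc_symm :
      evalCounitRight (TensorProduct.assoc R A B C).symm.toLinearMap =
        map LinearMap.id (evalCounitRight (LinearMap.id : B ⊗[R] C →ₗ[R] B ⊗[R] C)) := by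
    ext; simp [evalCounitRight]
  calc
    _ = evalCounitRight (TensorProduct.assoc R A B C).symm.toLinearMap ∘ₗ
          map LinearMap.id g ∘ₗ f := rfl
    _ = map LinearMap.id (evalCounitRight g) ∘ₗ f := by
      rw [evalCounitRight_assoc_symm, ← LinearMap.comp_assoc, ← map_comp]
      rfl

lemma evalCounitLeft_assoc_comp [CoalgebraStruct R C]
    (g : Q →ₗ[R] C ⊗[R] A) (f : P →ₗ[R] Q ⊗[R] B) :
    evalCounitLeft ((TensorProduct.assoc R C A B).toLinearMap ∘ₗ
      map g LinearMap.id ∘ₗ f) = map (evalCounitLeft g) LinearMap.id ∘ₗ f := by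
  have evalCounitLeft_assoc :
      evalCounitLeft (TensorProduct.assoc R C A B).toLinearMap =
        map (evalCounitLeft (LinearMap.id : C ⊗[R] A →ₗ[R] C ⊗[R] A)) LinearMap.id := by
    ext; simp [evalCounitLeft, smul_tmul']
  calc
    _ = evalCounitLeft (TensorProduct.assoc R C A B).toLinearMap ∘ₗ
          map g LinearMap.id ∘ₗ f := rfl
    _ = map (evalCounitLeft g) LinearMap.id ∘ₗ f := by
      rw [evalCounitLeft_assoc, ← LinearMap.comp_assoc, ← map_comp]
      rfl

lemma counit_comp_evalCounitRight_eq_counit_comp_evalCounitLeft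
    [CoalgebraStruct R C] [CoalgebraStruct R D] (f : P →ₗ[R] C ⊗[R] D) :
    Coalgebra.counit ∘ₗ evalCounitRight f = Coalgebra.counit ∘ₗ evalCounitLeft f := by
  have counit_tensor_counit :
      Coalgebra.counit ∘ₗ evalCounitRight (LinearMap.id : C ⊗[R] D →ₗ[R] C ⊗[R] D) =
        Coalgebra.counit ∘ₗ evalCounitLeft LinearMap.id := by
    ext; simp [evalCounitRight, evalCounitLeft, mul_comm]
  exact congrArg (· ∘ₗ f) counit_tensor_counit

lemma evalCounitRight_comul [Coalgebra R C] :
    evalCounitRight (Coalgebra.comul (R := R) (A := C)) = LinearMap.id := by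
  simp only [evalCounitRight, CoassocSimps.map_counit_comp_comul_right, coassoc_simps]

lemma evalCounitLeft_comul [Coalgebra R C] :
    evalCounitLeft (Coalgebra.comul (R := R) (A := C)) = LinearMap.id := by
  simp only [evalCounitLeft, CoassocSimps.map_counit_comp_comul_left, coassoc_simps]

end EvalCounit

section Bialgebra

variable {R A B C : Type*} [CommSemiring R] [Semiring A] [Algebra R A]
  [Semiring B] [Algebra R B] [Semiring C] [Bialgebra R C]

/-- `evalCounitRight` of an algebra homomorphism, as an algebra homomorphism. -/
noncomputable def evalCounitRightAlgHom (f : A →ₐ[R] B ⊗[R] C) : A →ₐ[R] B :=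
  (Algebra.TensorProduct.rid R R B).toAlgHom.comp
    ((Algebra.TensorProduct.map (AlgHom.id R B) (Bialgebra.counitAlgHom R C)).comp f)

lemma toLinearMap_evalCounitRightAlgHom (f : A →ₐ[R] B ⊗[R] C) :
    (evalCounitRightAlgHom f).toLinearMap = evalCounitRight f.toLinearMap :=
  rfl

end Bialgebra

section ComulMap

variable {R C V : Type*} [CommSemiring R] [AddCommMonoid C] [Module R C] [Coalgebra R C]
  [AddCommMonoid V] [Module R V]

/-- The map `(κ ⊗ id) ∘ Δ`; for a coalgebra map `κ`, the left coaction of its target induced by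
the coproduct. -/
noncomputable def comulMapLeft (κ : C →ₗ[R] V) : C →ₗ[R] V ⊗[R] C :=
  map κ LinearMap.id ∘ₗ Coalgebra.comul

/-- The map `(id ⊗ κ) ∘ Δ`; for a coalgebra map `κ`, the right coaction of its target induced by
the coproduct. -/
noncomputable def comulMapRight (κ : C →ₗ[R] V) : C →ₗ[R] C ⊗[R] V :=
  map LinearMap.id κ ∘ₗ Coalgebra.comul

lemma evalCounitRight_comulMapLeft (κ : C →ₗ[R] V) : evalCounitRight (comulMapLeft κ) = κ := by
  rw [comulMapLeft, evalCounitRight_map_comp, evalCounitRight_comul, LinearMap.comp_id]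

lemma evalCounitLeft_comulMapRight (κ : C →ₗ[R] V) : evalCounitLeft (comulMapRight κ) = κ := by
  rw [comulMapRight, evalCounitLeft_map_comp, evalCounitLeft_comul, LinearMap.comp_id]

lemma assoc_comp_comulMapLeft_comulMapRight (κ : C →ₗ[R] V) :
    (TensorProduct.assoc R C V C).toLinearMap ∘ₗ comulMapLeft (comulMapRight κ) =
      comulMapRight (comulMapLeft κ) := by
  simp only [comulMapLeft, comulMapRight, coassoc_simps]

/-- The compatibility condition `(ρ ⊗ id) ∘ Δ = (id ⊗ λ) ∘ Δ`, with the associator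
`(C ⊗ V) ⊗ C ≃ C ⊗ (V ⊗ C)` made explicit. -/
def ComulCompatible (lam : C →ₗ[R] V ⊗[R] C) (rho : C →ₗ[R] C ⊗[R] V) : Prop :=
  (TensorProduct.assoc R C V C).toLinearMap ∘ₗ comulMapLeft rho = comulMapRight lam

namespace ComulCompatible

variable {lam : C →ₗ[R] V ⊗[R] C} {rho : C →ₗ[R] C ⊗[R] V}

lemma eq_comulMapRight (h : ComulCompatible lam rho) :
    rho = comulMapRight (evalCounitRight lam) :=
  calc
    rho = evalCounitRight (comulMapLeft rho) := (evalCounitRight_comulMapLeft rho).symm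
    _ = evalCounitRight ((TensorProduct.assoc R C V C).symm.toLinearMap ∘ₗ comulMapRight lam) := by
      rw [← h, LinearEquiv.symm_comp_assoc]
    _ = comulMapRight (evalCounitRight lam) := evalCounitRight_assoc_symm_comp lam _

lemma eq_comulMapLeft (h : ComulCompatible lam rho) :
    lam = comulMapLeft (evalCounitLeft rho) :=
  calc
    lam = evalCounitLeft (comulMapRight lam) := (evalCounitLeft_comulMapRight lam).symm
    _ = evalCounitLeft ((TensorProduct.assoc R C V C).toLinearMap ∘ₗ comulMapLeft rho) := by
      rw [h]
    _ = comulMapLeft (evalCounitLeft rho) := evalCounitLeft_assoc_comp rho _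

lemma evalCounitRight_eq_evalCounitLeft (h : ComulCompatible lam rho) :
    evalCounitRight lam = evalCounitLeft rho := by
  rw [h.eq_comulMapLeft, evalCounitRight_comulMapLeft]

end ComulCompatible

theorem comulCompatible_iff_exists {lam : C →ₗ[R] V ⊗[R] C} {rho : C →ₗ[R] C ⊗[R] V} :
    ComulCompatible lam rho ↔ ∃ κ, lam = comulMapLeft κ ∧ rho = comulMapRight κ := by
  constructor
  · intro h
    exact ⟨evalCounitLeft rho, h.eq_comulMapLeft,
      h.evalCounitRight_eq_evalCounitLeft ▸ h.eq_comulMapRight⟩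
  · rintro ⟨κ, rfl, rfl⟩
    exact assoc_comp_comulMapLeft_comulMapRight κ

end ComulMap

section LeftCoaction

variable {R H V : Type*} [CommSemiring R] [AddCommMonoid H] [Module R H] [Coalgebra R H]
  [AddCommMonoid V] [Module R V]

/-- `lam` makes `V` a left comodule over the coalgebra `H`. -/
structure IsLeftCoaction_s11 (lam : V →ₗ[R] H ⊗[R] V) : Prop where
  coassoc : map LinearMap.id lam ∘ₗ lam =
    (TensorProduct.assoc R H H V).toLinearMap ∘ₗ map Coalgebra.comul LinearMap.id ∘ₗ lam
  evalCounitLeft_eq_id : evalCounitLeft lam = LinearMap.id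

namespace IsLeftCoaction_s11

variable [Coalgebra R V] {lam : V →ₗ[R] H ⊗[R] V}

lemma counit_comp_evalCounitRight (hlam : IsLeftCoaction_s11 lam) :
    Coalgebra.counit ∘ₗ evalCounitRight lam = Coalgebra.counit := by
  rw [counit_comp_evalCounitRight_eq_counit_comp_evalCounitLeft, hlam.evalCounitLeft_eq_id,
    LinearMap.comp_id]

lemma comul_comp_evalCounitRight (hlam : IsLeftCoaction_s11 lam) :
    Coalgebra.comul ∘ₗ evalCounitRight lam = map LinearMap.id (evalCounitRight lam) ∘ₗ lam :=
  calc
    Coalgebra.comul ∘ₗ evalCounitRight lam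
      = evalCounitRight (map Coalgebra.comul LinearMap.id ∘ₗ lam) :=
        (evalCounitRight_map_comp _ lam).symm
    _ = evalCounitRight ((TensorProduct.assoc R H H V).symm.toLinearMap ∘ₗ
          map LinearMap.id lam ∘ₗ lam) := by
      rw [hlam.coassoc, LinearEquiv.symm_comp_assoc]
    _ = map LinearMap.id (evalCounitRight lam) ∘ₗ lam := evalCounitRight_assoc_symm_comp lam lam

lemma comul_comp_eq_map_comp_comul {κ : V →ₗ[R] H} (hκ : IsLeftCoaction_s11 (comulMapLeft κ)) :
    Coalgebra.comul ∘ₗ κ = map κ κ ∘ₗ Coalgebra.comul := by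
  have h := hκ.comul_comp_evalCounitRight
  rw [evalCounitRight_comulMapLeft] at h
  simpa only [comulMapLeft, coassoc_simps] using h

lemma counit_comp_eq_counit {κ : V →ₗ[R] H} (hκ : IsLeftCoaction_s11 (comulMapLeft κ)) :
    Coalgebra.counit ∘ₗ κ = Coalgebra.counit := by
  simpa only [evalCounitRight_comulMapLeft] using hκ.counit_comp_evalCounitRight

end IsLeftCoaction_s11

end LeftCoaction

theorem statement11_general {R G M : Type*} [CommSemiring R] [Semiring G] [Bialgebra R G]
    [Semiring M] [Bialgebra R M] (lam : M →ₐ[R] G ⊗[R] M) (hlam : IsLeftCoaction_s11 lam.toLinearMap)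
    (rho : M →ₗ[R] M ⊗[R] G) :
    (∀ m, TensorProduct.assoc R M G M (comulMapLeft rho m) = comulMapRight lam.toLinearMap m) ↔
      evalCounitRight lam.toLinearMap = evalCounitLeft rho ∧
      (∀ m n, evalCounitRight lam.toLinearMap (m * n) =
        evalCounitRight lam.toLinearMap m * evalCounitRight lam.toLinearMap n) ∧
      evalCounitRight lam.toLinearMap 1 = 1 ∧
      (∀ m, Coalgebra.comul (R := R) (evalCounitRight lam.toLinearMap m) =
        map (evalCounitRight lam.toLinearMap) (evalCounitRight lam.toLinearMap)
          (Coalgebra.comul (R := R) m)) ∧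
      (∀ m, Coalgebra.counit (R := R) (evalCounitRight lam.toLinearMap m) =
        Coalgebra.counit (R := R) m) ∧
      (∀ m, lam m = comulMapLeft (evalCounitRight lam.toLinearMap) m) ∧
      ∀ m, rho m = comulMapRight (evalCounitRight lam.toLinearMap) m := by
  constructor
  · intro h
    obtain ⟨κ, hlamκ, rfl⟩ := comulCompatible_iff_exists.mp (LinearMap.ext h)
    have hκ : evalCounitRight lam.toLinearMap = κ := by rw [hlamκ, evalCounitRight_comulMapLeft]
    have hmul := map_mul (evalCounitRightAlgHom lam)
    have hone := map_one (evalCounitRightAlgHom lam)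
    simp only [← AlgHom.toLinearMap_apply, toLinearMap_evalCounitRightAlgHom, hκ] at hmul hone
    rw [hlamκ] at hlam
    rw [hκ]
    exact ⟨(evalCounitLeft_comulMapRight κ).symm, hmul, hone,
      LinearMap.congr_fun hlam.comul_comp_eq_map_comp_comul,
      LinearMap.congr_fun hlam.counit_comp_eq_counit,
      LinearMap.congr_fun hlamκ, fun _ => rfl⟩
  · rintro ⟨-, -, -, -, -, hlamκ, hrhoκ⟩
    exact LinearMap.congr_fun
      (comulCompatible_iff_exists.mpr ⟨_, LinearMap.ext hlamκ, LinearMap.ext hrhoκ⟩)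

/-- Let `(M, Δ_M, ε_M)` be a bialgebra and `(λ, ρ)` a commuting pair of left
and right `G`-coactions on `M` over a Hopf algebra `G`.  Then the compatibility condition
`(ρ ⊗ id) ∘ Δ_M = (id ⊗ λ) ∘ Δ_M` holds iff `κ := (id ⊗ ε_M) ∘ λ = (ε_M ⊗ id) ∘ ρ` is a
well-defined bialgebra homomorphism `κ : M → G` satisfying `λ = (κ ⊗ id) ∘ Δ_M` and
`ρ = (id ⊗ κ) ∘ Δ_M`. -/
theorem statement11
    (G M : Type*) [Ring G] [HopfAlgebra ℂ G] [Ring M] [Bialgebra ℂ M]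
    -- left coaction `λ`
    (lam : M →ₐ[ℂ] G ⊗[ℂ] M)
    (hlam_coassoc : ∀ m : M,
      TensorProduct.map LinearMap.id lam.toLinearMap (lam m) =
        (TensorProduct.assoc ℂ G G M)
          (TensorProduct.map (Coalgebra.comul (R := ℂ)) LinearMap.id (lam m)))
    (hlam_counit : ∀ m : M,
      (TensorProduct.lid ℂ M)
        (TensorProduct.map (Coalgebra.counit (R := ℂ)) LinearMap.id (lam m)) = m)
    -- right coaction `ρ`
    (rho : M →ₐ[ℂ] M ⊗[ℂ] G)
    (hrho_coassoc : ∀ m : M,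
      (TensorProduct.assoc ℂ M G G)
          (TensorProduct.map rho.toLinearMap LinearMap.id (rho m)) =
        TensorProduct.map LinearMap.id (Coalgebra.comul (R := ℂ)) (rho m))
    (hrho_counit : ∀ m : M,
      (TensorProduct.rid ℂ M)
        (TensorProduct.map LinearMap.id (Coalgebra.counit (R := ℂ)) (rho m)) = m)
    -- `λ` and `ρ` commute
    (hcomm : ∀ m : M,
      (TensorProduct.assoc ℂ G M G)
          (TensorProduct.map lam.toLinearMap LinearMap.id (rho m)) =
        TensorProduct.map LinearMap.id rho.toLinearMap (lam m)) :
    -- compatibility `(ρ ⊗ id_M) ∘ Δ_M = (id_M ⊗ λ) ∘ Δ_M` ...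
    (∀ m : M,
      (TensorProduct.assoc ℂ M G M)
          (TensorProduct.map rho.toLinearMap LinearMap.id (Coalgebra.comul (R := ℂ) m)) =
        TensorProduct.map LinearMap.id lam.toLinearMap (Coalgebra.comul (R := ℂ) m)) ↔
    -- ... iff `κ` is a well-defined bialgebra map with `λ = (κ ⊗ id) ∘ Δ_M`,
    -- `ρ = (id ⊗ κ) ∘ Δ_M`; here
    -- `κλ := (id_G ⊗ ε_M) ∘ λ` and `κρ := (ε_M ⊗ id_G) ∘ ρ`.
    (((TensorProduct.rid ℂ G).toLinearMap ∘ₗ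
        TensorProduct.map LinearMap.id (Coalgebra.counit (R := ℂ)) ∘ₗ lam.toLinearMap) =
      ((TensorProduct.lid ℂ G).toLinearMap ∘ₗ
        TensorProduct.map (Coalgebra.counit (R := ℂ)) LinearMap.id ∘ₗ rho.toLinearMap) ∧
     (∀ m n : M,
       ((TensorProduct.rid ℂ G).toLinearMap ∘ₗ
          TensorProduct.map LinearMap.id (Coalgebra.counit (R := ℂ)) ∘ₗ lam.toLinearMap)
            (m * n) =
        ((TensorProduct.rid ℂ G).toLinearMap ∘ₗ
          TensorProduct.map LinearMap.id (Coalgebra.counit (R := ℂ)) ∘ₗ lam.toLinearMap) m *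
        ((TensorProduct.rid ℂ G).toLinearMap ∘ₗ
          TensorProduct.map LinearMap.id (Coalgebra.counit (R := ℂ)) ∘ₗ lam.toLinearMap) n) ∧
     ((TensorProduct.rid ℂ G).toLinearMap ∘ₗ
        TensorProduct.map LinearMap.id (Coalgebra.counit (R := ℂ)) ∘ₗ lam.toLinearMap)
          (1 : M) = 1 ∧
     (∀ m : M,
       Coalgebra.comul (R := ℂ)
          (((TensorProduct.rid ℂ G).toLinearMap ∘ₗ
            TensorProduct.map LinearMap.id (Coalgebra.counit (R := ℂ)) ∘ₗ
              lam.toLinearMap) m) =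
        TensorProduct.map
          ((TensorProduct.rid ℂ G).toLinearMap ∘ₗ
            TensorProduct.map LinearMap.id (Coalgebra.counit (R := ℂ)) ∘ₗ lam.toLinearMap)
          ((TensorProduct.rid ℂ G).toLinearMap ∘ₗ
            TensorProduct.map LinearMap.id (Coalgebra.counit (R := ℂ)) ∘ₗ lam.toLinearMap)
          (Coalgebra.comul (R := ℂ) m)) ∧
     (∀ m : M,
       Coalgebra.counit (R := ℂ)
          (((TensorProduct.rid ℂ G).toLinearMap ∘ₗ
            TensorProduct.map LinearMap.id (Coalgebra.counit (R := ℂ)) ∘ₗ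
              lam.toLinearMap) m) =
        (Coalgebra.counit (R := ℂ) m : ℂ)) ∧
     (∀ m : M,
       lam m =
         TensorProduct.map
           ((TensorProduct.rid ℂ G).toLinearMap ∘ₗ
             TensorProduct.map LinearMap.id (Coalgebra.counit (R := ℂ)) ∘ₗ lam.toLinearMap)
           LinearMap.id (Coalgebra.comul (R := ℂ) m)) ∧
     (∀ m : M,
       rho m =
         TensorProduct.map LinearMap.id
           ((TensorProduct.rid ℂ G).toLinearMap ∘ₗ
             TensorProduct.map LinearMap.id (Coalgebra.counit (R := ℂ)) ∘ₗ lam.toLinearMap)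
           (Coalgebra.comul (R := ℂ) m))) :=
  statement11_general lam ⟨LinearMap.ext hlam_coassoc, LinearMap.ext hlam_counit⟩
    rho.toLinearMap
end
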